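/- arXiv:2307.10273 — 2 statements merged into one kernel-verified Lean document; each statement's English description precedes it below -/
import Mathlib

section
/- Let D₀ be the distribution of n i.i.d. samples X₁, …, Xₙ ~ N(0, I_d) on (ℝ^d)^n, and let D₁ be the distribution of (X₁, …, Xₙ) obtained by first drawing a random vector v ~ N(0, (1/d)·I_d) and then, conditionally on v, drawing each X_i i.i.d. from the mixture (1−ε)·N(αv, I_d) + ε·N(−((1−ε)/ε)·αv, I_d). Then there exists an absolute constant c > 0 such that if n = c·dε³/α⁴, α ≥ ε, and c·dε³/α⁴ ≥ √d/α², then the total variation distance satisfies d_TV(D₀, D₁) ≤ 0.1. -/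
open MeasureTheory ProbabilityTheory

/-- Total variation distance between two measures: `sup_A |P(A) − Q(A)|` over measurable `A`. -/
noncomputable def tvDist {Ω : Type*} [MeasurableSpace Ω] (P Q : Measure Ω) : ℝ :=
  sSup {x : ℝ | ∃ A : Set Ω, MeasurableSet A ∧ x = |(P A).toReal - (Q A).toReal|}

/-- The Gaussian measure `N(μ, I_d)` on `ℝ^d`, as a product of one-dimensional Gaussians. -/
noncomputable def gaussPi (d : ℕ) (μ : Fin d → ℝ) : Measure (Fin d → ℝ) :=
  Measure.pi fun j => gaussianReal (μ j) 1


lemma hb_lintegral_pi_prod {ι : Type*} [Fintype ι] {X : ι → Type*} [∀ i, MeasurableSpace (X i)]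
    (μ : ∀ i, Measure (X i)) [∀ i, IsProbabilityMeasure (μ i)] (f : ∀ i, X i → ENNReal)
    (hf : ∀ i, Measurable (f i)) :
    ∫⁻ x, ∏ i, f i (x i) ∂(Measure.pi μ) = ∏ i, ∫⁻ y, f i y ∂(μ i) := by
  have hind : iIndepFun (fun i (x : ∀ i, X i) => f i (x i)) (Measure.pi μ) :=
    iIndepFun_pi (fun i => (hf i).aemeasurable)
  have h := lintegral_prod_eq_prod_lintegral_of_indepFun Finset.univ
    (fun i (x : ∀ i, X i) => f i (x i)) hind
    (fun i => (hf i).comp (measurable_pi_apply i))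
  rw [h]
  refine Finset.prod_congr rfl fun i _ => ?_
  exact (measurePreserving_eval μ i).lintegral_comp (hf i)

lemma hb_pi_withDensity {ι : Type*} [Fintype ι] {X : ι → Type*} [∀ i, MeasurableSpace (X i)]
    (μ ν : ∀ i, Measure (X i)) [∀ i, IsProbabilityMeasure (μ i)]
    [∀ i, IsProbabilityMeasure (ν i)] (f : ∀ i, X i → ENNReal)
    (hf : ∀ i, Measurable (f i)) (h : ∀ i, ν i = (μ i).withDensity (f i)) :
    Measure.pi ν = (Measure.pi μ).withDensity (fun x => ∏ i, f i (x i)) := by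
  refine Measure.pi_eq fun s hs => ?_
  rw [withDensity_apply _ (MeasurableSet.univ_pi hs),
    ← lintegral_indicator (MeasurableSet.univ_pi hs)]
  have : ∀ x : ∀ i, X i, (Set.univ.pi s).indicator (fun x => ∏ i, f i (x i)) x
      = ∏ i, (s i).indicator (f i) (x i) := by
    intro x
    classical
    by_cases hx : x ∈ Set.univ.pi s
    · rw [Set.indicator_of_mem hx]
      refine Finset.prod_congr rfl fun i _ => ?_
      rw [Set.indicator_of_mem (hx i (Set.mem_univ i))]
    · rw [Set.indicator_of_notMem hx]
      simp only [Set.mem_pi, Set.mem_univ, true_implies, not_forall] at hx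
      obtain ⟨i, hi⟩ := hx
      exact (Finset.prod_eq_zero (Finset.mem_univ i) (Set.indicator_of_notMem hi _)).symm
  simp_rw [this]
  rw [hb_lintegral_pi_prod μ _ (fun i => (hf i).indicator (hs i))]
  refine Finset.prod_congr rfl fun i _ => ?_
  rw [h i, withDensity_apply _ (hs i), lintegral_indicator (hs i)]

/-- Gaussian likelihood ratio. -/
noncomputable def hbE (m x : ℝ) : ENNReal := ENNReal.ofReal (Real.exp (m * x - m ^ 2 / 2))

lemma hbE_meas : Measurable (fun p : ℝ × ℝ => hbE p.1 p.2) := by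
  unfold hbE; fun_prop

lemma hbE_meas' {α : Type*} [MeasurableSpace α] {f g : α → ℝ} (hf : Measurable f)
    (hg : Measurable g) : Measurable (fun a => hbE (f a) (g a)) :=
  hbE_meas.comp (hf.prodMk hg)

lemma hbE_meas_r (m : ℝ) : Measurable (hbE m) := hbE_meas' measurable_const measurable_id

lemma hb_gauss_shift (m : ℝ) :
    gaussianReal m 1 = (gaussianReal 0 1).withDensity (hbE m) := by
  rw [gaussianReal_of_var_ne_zero _ one_ne_zero, gaussianReal_of_var_ne_zero _ one_ne_zero,
    ← withDensity_mul _ (measurable_gaussianPDF 0 1) (hbE_meas_r m)]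
  congr 1
  ext x
  simp only [Pi.mul_apply, gaussianPDF, hbE, gaussianPDFReal]
  rw [← ENNReal.ofReal_mul (by positivity), mul_assoc _ (Real.exp _) (Real.exp _), ← Real.exp_add]
  congr 3
  simp
  ring

lemma hb_E_int (m : ℝ) : ∫⁻ x, hbE m x ∂(gaussianReal 0 1) = 1 := by
  have h : gaussianReal m 1 Set.univ = 1 := measure_univ
  rw [hb_gauss_shift m, withDensity_apply _ MeasurableSet.univ] at h
  simpa using h

lemma hb_E_mul_int (m m' : ℝ) :
    ∫⁻ x, hbE m x * hbE m' x ∂(gaussianReal 0 1) = ENNReal.ofReal (Real.exp (m * m')) := by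
  have : ∀ x, hbE m x * hbE m' x = ENNReal.ofReal (Real.exp (m * m')) * hbE (m + m') x := by
    intro x
    unfold hbE
    rw [← ENNReal.ofReal_mul (by positivity), ← ENNReal.ofReal_mul (by positivity),
      ← Real.exp_add, ← Real.exp_add]
    congr 2
    ring
  simp_rw [this]
  rw [lintegral_const_mul _ (hbE_meas_r _), hb_E_int, mul_one]

lemma hb_mgf (s : NNReal) (t : ℝ) :
    ∫⁻ x, ENNReal.ofReal (Real.exp (t * x)) ∂(gaussianReal 0 s)
      = ENNReal.ofReal (Real.exp (s * t ^ 2 / 2)) := by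
  rw [← ofReal_integral_eq_lintegral_ofReal (integrable_exp_mul_gaussianReal t)
    (Filter.Eventually.of_forall fun x => (Real.exp_pos _).le)]
  have := congrFun (mgf_fun_id_gaussianReal (μ := 0) (v := s)) t
  simp only [mgf] at this
  rw [this]; simp

lemma hb_chi (a : ℝ) (ha : a < 1 / 2) :
    ∫⁻ x, ENNReal.ofReal (Real.exp (a * x ^ 2)) ∂(gaussianReal 0 1)
      = ENNReal.ofReal (Real.sqrt (1 / (1 - 2 * a))) := by
  rw [gaussianReal_of_var_ne_zero _ one_ne_zero,
    lintegral_withDensity_eq_lintegral_mul _ (measurable_gaussianPDF 0 1) (by fun_prop)]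
  have hb : 0 < 1 / 2 - a := by linarith
  have h1 : ∀ x : ℝ, (gaussianPDF 0 1 * fun x => ENNReal.ofReal (Real.exp (a * x ^ 2))) x
      = ENNReal.ofReal ((Real.sqrt (2 * Real.pi))⁻¹ * Real.exp (-(1 / 2 - a) * x ^ 2)) := by
    intro x
    simp only [Pi.mul_apply, gaussianPDF, gaussianPDFReal]
    rw [← ENNReal.ofReal_mul (by positivity), mul_assoc, ← Real.exp_add]
    congr 3
    · simp
    · simp; ring
  simp_rw [h1]
  rw [← ofReal_integral_eq_lintegral_ofReal ((integrable_exp_neg_mul_sq hb).const_mul _)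
    (Filter.Eventually.of_forall fun x => by positivity), integral_const_mul, integral_gaussian,
    ← Real.sqrt_inv, ← Real.sqrt_mul (by positivity)]
  congr 2
  have : 1 - 2 * a ≠ 0 := by linarith
  have := Real.pi_ne_zero
  field_simp


lemma hb_tv_core {Ω : Type*} [MeasurableSpace Ω] (P : Measure Ω) [IsProbabilityMeasure P]
    (F : Ω → ENNReal) (hF : Measurable F)
    (h1 : ENNReal.ofReal 0.998 ≤ ∫⁻ x, F x ∂P)
    (h2 : ∫⁻ x, F x * F x ∂P ≤ ENNReal.ofReal 1.005) (A : Set Ω) (hA : MeasurableSet A) :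
    P A ≤ ∫⁻ x in A, F x ∂P + ENNReal.ofReal 0.1 := by
  have h2' : ∫⁻ x, F x * F x ∂P < ⊤ := lt_of_le_of_lt h2 ENNReal.ofReal_lt_top
  have hfin : ∀ᵐ x ∂P, F x < ⊤ := by
    filter_upwards [ae_lt_top (hF.mul hF) h2'.ne] with x hx
    by_contra hc
    rw [not_lt, top_le_iff] at hc
    simp [hc] at hx
  set f : Ω → ℝ := fun x => (F x).toReal with hf
  have hfm : Measurable f := hF.ennreal_toReal
  have hf0 : ∀ x, 0 ≤ f x := fun x => ENNReal.toReal_nonneg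
  have hF2 : ∫⁻ x, ENNReal.ofReal (f x * f x) ∂P = ∫⁻ x, F x * F x ∂P := by
    refine lintegral_congr_ae ?_
    filter_upwards [hfin] with x hx
    rw [ENNReal.ofReal_mul (hf0 x), ENNReal.ofReal_toReal hx.ne]
  have i2 : Integrable (fun x => f x * f x) P := by
    refine ⟨(hfm.mul hfm).aestronglyMeasurable, ?_⟩
    rw [hasFiniteIntegral_iff_ofReal (Filter.Eventually.of_forall fun x => mul_nonneg (hf0 x) (hf0 x)),
      hF2]
    exact h2'
  have i1 : Integrable f P := by
    refine Integrable.mono' (i2.add (integrable_const 1)) hfm.aestronglyMeasurable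
      (Filter.Eventually.of_forall fun x => ?_)
    rw [Real.norm_of_nonneg (hf0 x)]
    simp only [Pi.add_apply]
    nlinarith [sq_nonneg (f x - 1)]
  have e1 : ENNReal.ofReal (∫ x, f x ∂P) = ∫⁻ x, F x ∂P := by
    rw [ofReal_integral_eq_lintegral_ofReal i1 (Filter.Eventually.of_forall hf0)]
    refine lintegral_congr_ae ?_
    filter_upwards [hfin] with x hx
    rw [ENNReal.ofReal_toReal hx.ne]
  have e1A : ENNReal.ofReal (∫ x in A, f x ∂P) = ∫⁻ x in A, F x ∂P := by
    rw [ofReal_integral_eq_lintegral_ofReal i1.integrableOn (Filter.Eventually.of_forall hf0)]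
    refine lintegral_congr_ae ?_
    filter_upwards [ae_restrict_of_ae hfin] with x hx
    rw [ENNReal.ofReal_toReal hx.ne]
  have e2 : ENNReal.ofReal (∫ x, f x * f x ∂P) = ∫⁻ x, F x * F x ∂P := by
    rw [ofReal_integral_eq_lintegral_ofReal i2
      (Filter.Eventually.of_forall fun x => mul_nonneg (hf0 x) (hf0 x)), hF2]
  have r1 : 0.998 ≤ ∫ x, f x ∂P := by
    rw [← e1] at h1
    exact (ENNReal.ofReal_le_ofReal_iff (integral_nonneg hf0)).1 h1
  have r2 : ∫ x, f x * f x ∂P ≤ 1.005 := by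
    rw [← e2] at h2
    exact (ENNReal.ofReal_le_ofReal_iff (by norm_num)).1 h2
  have iq : Integrable (fun x => 5.05 - 10 * f x + 5 * (f x * f x)) P :=
    ((integrable_const _).sub (i1.const_mul 10)).add (i2.const_mul 5)
  have key : P.real A - ∫ x in A, f x ∂P ≤ 0.1 := by
    calc P.real A - ∫ x in A, f x ∂P = ∫ x in A, (1 - f x) ∂P := by
          rw [integral_sub (integrable_const _) i1.integrableOn]; simp
      _ ≤ ∫ x in A, (5.05 - 10 * f x + 5 * (f x * f x)) ∂P := by
          refine integral_mono ((integrable_const _).sub i1.integrableOn) iq.integrableOn ?_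
          intro x
          simp only
          nlinarith [sq_nonneg (1 - f x - 0.1)]
      _ ≤ ∫ x, (5.05 - 10 * f x + 5 * (f x * f x)) ∂P := by
          refine setIntegral_le_integral iq (Filter.Eventually.of_forall fun x => ?_)
          simp only [Pi.zero_apply]
          nlinarith [sq_nonneg (1 - f x)]
      _ = 5.05 - 10 * ∫ x, f x ∂P + 5 * ∫ x, f x * f x ∂P := by
          have hs : Integrable (fun x => 5.05 - 10 * f x) P :=
            (integrable_const _).sub (i1.const_mul 10)
          rw [integral_add hs (i2.const_mul 5),
            integral_sub (integrable_const _) (i1.const_mul 10), integral_const_mul,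
            integral_const_mul]
          simp
      _ ≤ 0.1 := by linarith
  rw [← e1A, ← ENNReal.ofReal_add (setIntegral_nonneg hA fun x _ => hf0 x) (by norm_num),
    ← ofReal_measureReal]
  exact ENNReal.ofReal_le_ofReal (by linarith)

lemma hb_tv_abstract {Ω Θ : Type*} [MeasurableSpace Ω] [MeasurableSpace Θ] (P : Measure Ω)
    [IsProbabilityMeasure P] (ρ : Measure Θ) [IsProbabilityMeasure ρ]
    (L : Θ → Ω → ENNReal) (hL : Measurable (Function.uncurry L))
    (hL1 : ∀ θ, ∫⁻ x, L θ x ∂P = 1) (G : Set Θ)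
    (hG : ENNReal.ofReal 0.998 ≤ ρ G)
    (h2 : ∫⁻ θ in G, ∫⁻ θ' in G, ∫⁻ x, L θ x * L θ' x ∂P ∂ρ ∂ρ ≤ ENNReal.ofReal 1.005)
    (A : Set Ω) (hA : MeasurableSet A) :
    P A ≤ ∫⁻ θ, ∫⁻ x in A, L θ x ∂P ∂ρ + ENNReal.ofReal 0.1 := by
  set ρ' := ρ.restrict G with hρ'
  have hLs : Measurable (fun p : Ω × Θ => L p.2 p.1) := hL.comp measurable_swap
  have hLθ : ∀ θ, Measurable (L θ) := fun θ => hL.comp measurable_prodMk_left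
  have hLx : ∀ x, Measurable (fun θ => L θ x) := fun x => hL.comp measurable_prodMk_right
  have hF : Measurable (fun x => ∫⁻ θ, L θ x ∂ρ') := hLs.lintegral_prod_right'
  have := hb_tv_core P (fun x => ∫⁻ θ, L θ x ∂ρ') hF ?_ ?_ A hA
  · refine this.trans (add_le_add_left ?_ _)
    rw [lintegral_lintegral_swap hLs.aemeasurable]
    exact lintegral_mono' Measure.restrict_le_self le_rfl
  · rw [lintegral_lintegral_swap hLs.aemeasurable]
    simp_rw [hL1]
    simpa [hρ'] using hG
  · refine le_trans (le_of_eq ?_) h2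
    have : ∀ x, (∫⁻ θ, L θ x ∂ρ') * (∫⁻ θ, L θ x ∂ρ')
        = ∫⁻ θ, ∫⁻ θ', L θ x * L θ' x ∂ρ' ∂ρ' := by
      intro x
      rw [← lintegral_mul_const _ (hLx x)]
      refine lintegral_congr fun θ => ?_
      rw [lintegral_const_mul _ (hLx x)]
    simp_rw [this]
    have m1 : Measurable (fun q : (Ω × Θ) × Θ => L q.1.2 q.1.1 * L q.2 q.1.1) := by
      refine Measurable.mul (hLs.comp measurable_fst) ?_
      exact hL.comp (measurable_snd.prodMk (measurable_fst.comp measurable_fst))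
    rw [lintegral_lintegral_swap]
    · refine lintegral_congr fun θ => ?_
      rw [lintegral_lintegral_swap]
      refine Measurable.aemeasurable ?_
      exact ((hLθ θ).comp measurable_fst).mul hLs
    · exact (m1.lintegral_prod_right').aemeasurable

/-- The law of the (scaled) label. -/
noncomputable def hbNu (ε : ℝ) : Measure ℝ :=
  ENNReal.ofReal (1 - ε) • Measure.dirac 1 + ENNReal.ofReal ε • Measure.dirac (-((1 - ε) / ε))

lemma hbNu_int (ε : ℝ) (f : ℝ → ENNReal) :
    ∫⁻ w, f w ∂(hbNu ε)
      = ENNReal.ofReal (1 - ε) * f 1 + ENNReal.ofReal ε * f (-((1 - ε) / ε)) := by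
  unfold hbNu
  rw [lintegral_add_measure, lintegral_smul_measure, lintegral_smul_measure, lintegral_dirac,
    lintegral_dirac]
  simp

lemma hbNu_prob (ε : ℝ) (h0 : 0 < ε) (h1 : ε ≤ 1) : IsProbabilityMeasure (hbNu ε) := by
  constructor
  have := hbNu_int ε (fun _ => 1)
  rw [lintegral_one] at this
  rw [this, mul_one, mul_one, ← ENNReal.ofReal_add (by linarith) h0.le]
  simp

/-- Likelihood of the sample given the mean direction and the labels. -/
noncomputable def hbL (d n : ℕ) (α : ℝ) (θ : (Fin d → ℝ) × (Fin n → ℝ))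
    (x : Fin n → Fin d → ℝ) : ENNReal :=
  ∏ i, ∏ j, hbE (θ.2 i * α * θ.1 j) (x i j)

lemma hbL_meas (d n : ℕ) (α : ℝ) : Measurable (Function.uncurry (hbL d n α)) := by
  unfold Function.uncurry hbL
  refine Finset.measurable_prod _ fun i _ => Finset.measurable_prod _ fun j _ => ?_
  exact hbE_meas' (by fun_prop) (by fun_prop)

instance hb_gaussPi_prob (d : ℕ) (m : Fin d → ℝ) : IsProbabilityMeasure (gaussPi d m) := by
  unfold gaussPi; infer_instance

lemma hb_gaussPi (d : ℕ) (c : ℝ) (v : Fin d → ℝ) :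
    gaussPi d (c • v) = (gaussPi d 0).withDensity (fun x => ∏ j, hbE (c * v j) (x j)) := by
  unfold gaussPi
  refine hb_pi_withDensity _ _ (fun j => hbE (c * v j)) (fun j => hbE_meas_r _) fun j => ?_
  exact hb_gauss_shift _

lemma hb_mix (d : ℕ) (ε α : ℝ) (v : Fin d → ℝ) :
    ENNReal.ofReal (1 - ε) • gaussPi d (α • v) +
      ENNReal.ofReal ε • gaussPi d ((-((1 - ε) / ε) * α) • v)
    = (gaussPi d 0).withDensity (fun x => ∫⁻ w, ∏ j, hbE (w * α * v j) (x j) ∂(hbNu ε)) := by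
  have hm : ∀ c : ℝ, Measurable (fun x : Fin d → ℝ => ∏ j, hbE (c * v j) (x j)) := fun c =>
    Finset.measurable_prod _ fun j _ => hbE_meas' measurable_const (measurable_pi_apply j)
  rw [hb_gaussPi d α, hb_gaussPi d (-((1 - ε) / ε) * α), ← withDensity_smul _ (hm _),
    ← withDensity_smul _ (hm _), ← withDensity_add_left ((hm _).const_smul _)]
  congr 1
  ext x
  rw [hbNu_int]
  simp

lemma hb_pimix (d n : ℕ) (ε α : ℝ) (h0 : 0 < ε) (h1 : ε ≤ 1) (v : Fin d → ℝ) :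
    (Measure.pi fun _ : Fin n => ENNReal.ofReal (1 - ε) • gaussPi d (α • v) +
      ENNReal.ofReal ε • gaussPi d ((-((1 - ε) / ε) * α) • v))
    = (Measure.pi fun _ : Fin n => gaussPi d 0).withDensity
      (fun x => ∫⁻ W, hbL d n α (v, W) x ∂(Measure.pi fun _ : Fin n => hbNu ε)) := by
  have hp := hbNu_prob ε h0 h1
  have hpm : IsProbabilityMeasure (ENNReal.ofReal (1 - ε) • gaussPi d (α • v) +
      ENNReal.ofReal ε • gaussPi d ((-((1 - ε) / ε) * α) • v)) := by
    constructor
    simp only [Measure.add_apply, Measure.smul_apply, measure_univ, smul_eq_mul, mul_one]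
    rw [← ENNReal.ofReal_add (by linarith) h0.le]
    simp
  have hm : Measurable (fun p : (Fin d → ℝ) × ℝ => ∏ j, hbE (p.2 * α * v j) (p.1 j)) :=
    Finset.measurable_prod _ fun j _ => hbE_meas' (by fun_prop) (by fun_prop)
  rw [hb_pi_withDensity (fun _ : Fin n => gaussPi d 0) _
    (fun _ x => ∫⁻ w, ∏ j, hbE (w * α * v j) (x j) ∂(hbNu ε))
    (fun _ => hm.lintegral_prod_right') (fun _ => hb_mix d ε α v)]
  congr 1
  ext x
  unfold hbL
  rw [hb_lintegral_pi_prod (fun _ : Fin n => hbNu ε)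
    (fun i w => ∏ j, hbE (w * α * v j) (x i j))]
  intro i
  exact Finset.measurable_prod _ fun j _ => hbE_meas' (by fun_prop) (by fun_prop)

lemma hb_bind (d n : ℕ) (ε α : ℝ) (h0 : 0 < ε) (h1 : ε ≤ 1) (V : Measure (Fin d → ℝ))
    [IsProbabilityMeasure V] (A : Set (Fin n → Fin d → ℝ)) (hA : MeasurableSet A) :
    V.bind (fun v => Measure.pi fun _ : Fin n => ENNReal.ofReal (1 - ε) • gaussPi d (α • v) +
      ENNReal.ofReal ε • gaussPi d ((-((1 - ε) / ε) * α) • v)) A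
    = ∫⁻ θ, ∫⁻ x in A, hbL d n α θ x ∂(Measure.pi fun _ : Fin n => gaussPi d 0)
        ∂(V.prod (Measure.pi fun _ : Fin n => hbNu ε)) := by
  have hp := hbNu_prob ε h0 h1
  simp_rw [hb_pimix d n ε α h0 h1]
  have hm : Measurable (fun p : ((Fin d → ℝ) × (Fin n → Fin d → ℝ)) × (Fin n → ℝ) =>
      hbL d n α (p.1.1, p.2) p.1.2) := by
    unfold hbL
    refine Finset.measurable_prod _ fun i _ => Finset.measurable_prod _ fun j _ => ?_
    exact hbE_meas' (by fun_prop) (by fun_prop)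
  have hm1 := hm.lintegral_prod_right' (ν := Measure.pi fun _ : Fin n => hbNu ε)
  rw [Measure.bind_apply hA]
  · have hmA : Measurable (fun θ : (Fin d → ℝ) × (Fin n → ℝ) =>
        ∫⁻ x in A, hbL d n α θ x ∂(Measure.pi fun _ : Fin n => gaussPi d 0)) :=
      (hbL_meas d n α).lintegral_prod_right'
    rw [lintegral_prod _ hmA.aemeasurable]
    refine lintegral_congr fun v => ?_
    rw [withDensity_apply _ hA, lintegral_lintegral_swap]
    have hg : Measurable (fun q : (Fin n → Fin d → ℝ) × (Fin n → ℝ) =>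
        (((v, q.1), q.2) : ((Fin d → ℝ) × (Fin n → Fin d → ℝ)) × (Fin n → ℝ))) :=
      (measurable_const.prodMk measurable_fst).prodMk measurable_snd
    have hmg := hm.comp hg
    exact hmg.aemeasurable
  · refine (Measure.measurable_of_measurable_coe _ fun B hB => ?_).aemeasurable
    simp_rw [withDensity_apply _ hB]
    exact hm1.lintegral_prod_right'

lemma hbL_int (d n : ℕ) (α : ℝ) (θ : (Fin d → ℝ) × (Fin n → ℝ)) :
    ∫⁻ x, hbL d n α θ x ∂(Measure.pi fun _ : Fin n => gaussPi d 0) = 1 := by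
  unfold hbL
  rw [hb_lintegral_pi_prod (fun _ : Fin n => gaussPi d 0)
    (fun i y => ∏ j, hbE (θ.2 i * α * θ.1 j) (y j))
    (fun i => Finset.measurable_prod _ fun j _ => hbE_meas' (by fun_prop) (by fun_prop))]
  refine Finset.prod_eq_one fun i _ => ?_
  unfold gaussPi
  rw [hb_lintegral_pi_prod _ (fun j => hbE (θ.2 i * α * θ.1 j)) (fun j => hbE_meas_r _)]
  exact Finset.prod_eq_one fun j _ => hb_E_int _

lemma hbL_overlap (d n : ℕ) (α : ℝ) (θ θ' : (Fin d → ℝ) × (Fin n → ℝ)) :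
    ∫⁻ x, hbL d n α θ x * hbL d n α θ' x ∂(Measure.pi fun _ : Fin n => gaussPi d 0)
    = ENNReal.ofReal (Real.exp
        ((α ^ 2 * ∑ j, θ.1 j * θ'.1 j) * ∑ i, θ.2 i * θ'.2 i)) := by
  unfold hbL
  simp_rw [← Finset.prod_mul_distrib]
  rw [hb_lintegral_pi_prod (fun _ : Fin n => gaussPi d 0)
    (fun i y => ∏ j, hbE (θ.2 i * α * θ.1 j) (y j) * hbE (θ'.2 i * α * θ'.1 j) (y j))
    (fun i => Finset.measurable_prod _ fun j _ =>
      (hbE_meas' (by fun_prop) (by fun_prop)).mul (hbE_meas' (by fun_prop) (by fun_prop)))]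
  unfold gaussPi
  simp_rw [Pi.zero_apply]
  have : ∀ i : Fin n, ∫⁻ y, ∏ j, hbE (θ.2 i * α * θ.1 j) (y j) * hbE (θ'.2 i * α * θ'.1 j) (y j)
      ∂(Measure.pi fun _ : Fin d => gaussianReal 0 1)
      = ENNReal.ofReal (Real.exp ((α ^ 2 * ∑ j, θ.1 j * θ'.1 j) * (θ.2 i * θ'.2 i))) := by
    intro i
    rw [hb_lintegral_pi_prod (fun _ : Fin d => gaussianReal 0 1)
      (fun j y => hbE (θ.2 i * α * θ.1 j) y * hbE (θ'.2 i * α * θ'.1 j) y)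
      (fun j => (hbE_meas_r _).mul (hbE_meas_r _))]
    simp_rw [hb_E_mul_int]
    rw [← ENNReal.ofReal_prod_of_nonneg (fun _ _ => (Real.exp_pos _).le), ← Real.exp_sum]
    congr 2
    rw [Finset.mul_sum, Finset.sum_mul]
    exact Finset.sum_congr rfl fun j _ => by ring
  simp_rw [this]
  rw [← ENNReal.ofReal_prod_of_nonneg (fun _ _ => (Real.exp_pos _).le), ← Real.exp_sum,
    ← Finset.mul_sum]


lemma hb_exp_le (x : ℝ) (hx : |x| ≤ 1) : Real.exp x ≤ 1 + x + x ^ 2 := by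
  have := (abs_le.1 (Real.abs_exp_sub_one_sub_id_le hx)).2
  linarith

lemma hb_one_overlap (ε t : ℝ) (h0 : 0 < ε) (h1 : ε ≤ 1) (ht : |t| ≤ ε ^ 2) :
    ∫⁻ w, ∫⁻ w', ENNReal.ofReal (Real.exp (t * (w * w'))) ∂(hbNu ε) ∂(hbNu ε)
      ≤ ENNReal.ofReal (Real.exp (t ^ 2 / ε ^ 2)) := by
  have h1' : 0 ≤ 1 - ε := by linarith
  simp_rw [hbNu_int]
  set b := -((1 - ε) / ε) with hb
  have hbε : ε * b = -(1 - ε) := by rw [hb]; field_simp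
  rw [← ENNReal.ofReal_mul h1', ← ENNReal.ofReal_mul h0.le, ← ENNReal.ofReal_mul h1',
    ← ENNReal.ofReal_mul h0.le, ← ENNReal.ofReal_add (by positivity) (by positivity),
    ← ENNReal.ofReal_add (by positivity) (by positivity), ← ENNReal.ofReal_mul h1',
    ← ENNReal.ofReal_mul h0.le, ← ENNReal.ofReal_add (by positivity) (by positivity)]
  refine ENNReal.ofReal_le_ofReal ?_
  have hb1 : |b| ≤ 1 / ε := by
    rw [hb, abs_neg, abs_of_nonneg (by positivity)]
    gcongr; linarith
  have ho : (1 : ℝ) ≤ 1 / ε := by rw [le_div_iff₀ h0]; linarith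
  have hkey : ∀ w w' : ℝ, |w| ≤ 1 / ε → |w'| ≤ 1 / ε → |t * (w * w')| ≤ 1 := by
    intro w w' hw hw'
    rw [abs_mul, abs_mul]
    calc |t| * (|w| * |w'|) ≤ ε ^ 2 * (1 / ε * (1 / ε)) := by gcongr
      _ = 1 := by field_simp
  have a1 : |(1 : ℝ)| ≤ 1 / ε := by simpa using ho
  have e11 := hb_exp_le _ (hkey 1 1 a1 a1)
  have e1b := hb_exp_le _ (hkey 1 b a1 hb1)
  have eb1 := hb_exp_le _ (hkey b 1 hb1 a1)
  have ebb := hb_exp_le _ (hkey b b hb1 hb1)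
  calc _ ≤ (1 - ε) * ((1 - ε) * (1 + t * (1 * 1) + (t * (1 * 1)) ^ 2)
          + ε * (1 + t * (1 * b) + (t * (1 * b)) ^ 2))
        + ε * ((1 - ε) * (1 + t * (b * 1) + (t * (b * 1)) ^ 2)
          + ε * (1 + t * (b * b) + (t * (b * b)) ^ 2)) := by gcongr
    _ = 1 + t * ((1 - ε) + ε * b) ^ 2 + t ^ 2 * ((1 - ε) + (ε * b) * b) ^ 2 := by ring
    _ = 1 + t ^ 2 * ((1 - ε) / ε) ^ 2 := by
        rw [hbε, hb]; field_simp; ring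
    _ ≤ 1 + t ^ 2 * (1 / ε) ^ 2 := by gcongr; linarith
    _ = t ^ 2 / ε ^ 2 + 1 := by field_simp; ring
    _ ≤ _ := Real.add_one_le_exp _

lemma hb_label_overlap (n : ℕ) (ε t K : ℝ) (h0 : 0 < ε) (h1 : ε ≤ 1) (R : ℝ)
    (hA : |t| ≤ ε ^ 2 → n * (t ^ 2 / ε ^ 2) ≤ R)
    (hB : ε ^ 2 < |t| → |t| * (K * n / ε) ≤ R) :
    ∫⁻ W in {W : Fin n → ℝ | ∑ i, W i ^ 2 ≤ K * n / ε},
      ∫⁻ W' in {W : Fin n → ℝ | ∑ i, W i ^ 2 ≤ K * n / ε},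
        ENNReal.ofReal (Real.exp (t * ∑ i, W i * W' i))
        ∂(Measure.pi fun _ : Fin n => hbNu ε) ∂(Measure.pi fun _ : Fin n => hbNu ε)
      ≤ ENNReal.ofReal (Real.exp R) := by
  have hp := hbNu_prob ε h0 h1
  rcases le_or_gt |t| (ε ^ 2) with ht | ht
  · calc _ ≤ ∫⁻ W, ∫⁻ W', ENNReal.ofReal (Real.exp (t * ∑ i, W i * W' i))
        ∂(Measure.pi fun _ : Fin n => hbNu ε) ∂(Measure.pi fun _ : Fin n => hbNu ε) :=
          lintegral_mono' Measure.restrict_le_self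
            fun W => lintegral_mono' Measure.restrict_le_self le_rfl
      _ = ∏ i : Fin n, ∫⁻ w, ∫⁻ w', ENNReal.ofReal (Real.exp (t * (w * w')))
            ∂(hbNu ε) ∂(hbNu ε) := by
          have hm : Measurable (fun p : ℝ × ℝ => ENNReal.ofReal (Real.exp (t * (p.1 * p.2)))) := by
            fun_prop
          rw [← hb_lintegral_pi_prod (fun _ : Fin n => hbNu ε)
            (fun _ w => ∫⁻ w', ENNReal.ofReal (Real.exp (t * (w * w'))) ∂(hbNu ε))
            (fun _ => hm.lintegral_prod_right')]
          refine lintegral_congr fun W => ?_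
          rw [← hb_lintegral_pi_prod (fun _ : Fin n => hbNu ε)
            (fun i w' => ENNReal.ofReal (Real.exp (t * (W i * w')))) (fun _ => by fun_prop)]
          refine lintegral_congr fun W' => ?_
          rw [← ENNReal.ofReal_prod_of_nonneg (fun _ _ => (Real.exp_pos _).le), ← Real.exp_sum,
            Finset.mul_sum]
      _ ≤ ∏ i : Fin n, ENNReal.ofReal (Real.exp (t ^ 2 / ε ^ 2)) :=
          Finset.prod_le_prod' fun i _ => hb_one_overlap ε t h0 h1 ht
      _ = ENNReal.ofReal (Real.exp (n * (t ^ 2 / ε ^ 2))) := by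
          rw [← ENNReal.ofReal_prod_of_nonneg (fun _ _ => (Real.exp_pos _).le), ← Real.exp_sum]
          simp
      _ ≤ _ := ENNReal.ofReal_le_ofReal (Real.exp_le_exp.2 (hA ht))
  · have hmS : MeasurableSet {W : Fin n → ℝ | ∑ i, W i ^ 2 ≤ K * n / ε} :=
      measurableSet_le (by fun_prop) measurable_const
    calc _ ≤ ∫⁻ W in {W : Fin n → ℝ | ∑ i, W i ^ 2 ≤ K * n / ε},
          ∫⁻ W' in {W : Fin n → ℝ | ∑ i, W i ^ 2 ≤ K * n / ε}, ENNReal.ofReal (Real.exp R)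
          ∂(Measure.pi fun _ : Fin n => hbNu ε) ∂(Measure.pi fun _ : Fin n => hbNu ε) := by
          refine setLIntegral_mono' hmS fun W hW => setLIntegral_mono' hmS fun W' hW' => ?_
          refine ENNReal.ofReal_le_ofReal (Real.exp_le_exp.2 (le_trans ?_ (hB ht)))
          refine (le_abs_self _).trans ?_
          rw [abs_mul]
          refine mul_le_mul_of_nonneg_left ?_ (abs_nonneg _)
          simp only [Set.mem_ofPred_eq] at hW hW'
          have hs : ∑ i, |W i * W' i| ≤ ∑ i, (W i ^ 2 + W' i ^ 2) / 2 := by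
            refine Finset.sum_le_sum fun i _ => ?_
            rw [abs_le]
            constructor <;> nlinarith [sq_nonneg (W i - W' i), sq_nonneg (W i + W' i)]
          rw [← Finset.sum_div, Finset.sum_add_distrib] at hs
          have := Finset.abs_sum_le_sum_abs (fun i => W i * W' i) Finset.univ
          linarith
      _ ≤ ∫⁻ W, ∫⁻ W', ENNReal.ofReal (Real.exp R)
          ∂(Measure.pi fun _ : Fin n => hbNu ε) ∂(Measure.pi fun _ : Fin n => hbNu ε) :=
          lintegral_mono' Measure.restrict_le_self
            fun W => lintegral_mono' Measure.restrict_le_self le_rfl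
      _ = _ := by simp

lemma hb_gauss_overlap (d : ℕ) (hd : 0 < d) (v : Fin d → ℝ) (lam K : ℝ) (hl : 0 ≤ lam)
    (hv : ∑ j, v j ^ 2 ≤ K) (hK : lam * K ≤ 0.001) :
    ∫⁻ v', ENNReal.ofReal (Real.exp (lam * d * (∑ j, v j * v' j) ^ 2))
      ∂(Measure.pi fun _ : Fin d => gaussianReal 0 (Real.toNNReal (1 / d)))
      ≤ ENNReal.ofReal 1.005 := by
  have hd' : (0 : ℝ) < d := by exact_mod_cast hd
  set r := Real.sqrt (2 * lam * d) with hr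
  have hr2 : r ^ 2 = 2 * lam * d := Real.sq_sqrt (by positivity)
  have e1 : ∀ v' : Fin d → ℝ, ENNReal.ofReal (Real.exp (lam * d * (∑ j, v j * v' j) ^ 2))
      = ∫⁻ g, ENNReal.ofReal (Real.exp ((r * ∑ j, v j * v' j) * g)) ∂(gaussianReal 0 1) := by
    intro v'
    rw [hb_mgf]
    congr 2
    rw [mul_pow, hr2]
    simp
    ring
  simp_rw [e1]
  rw [lintegral_lintegral_swap (by fun_prop)]
  have e2 : ∀ g : ℝ, ∫⁻ v', ENNReal.ofReal (Real.exp ((r * ∑ j, v j * v' j) * g))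
      ∂(Measure.pi fun _ : Fin d => gaussianReal 0 (Real.toNNReal (1 / d)))
      = ENNReal.ofReal (Real.exp (lam * (∑ j, v j ^ 2) * g ^ 2)) := by
    intro g
    have : ∀ v' : Fin d → ℝ, ENNReal.ofReal (Real.exp ((r * ∑ j, v j * v' j) * g))
        = ∏ j, ENNReal.ofReal (Real.exp ((r * v j * g) * v' j)) := by
      intro v'
      rw [← ENNReal.ofReal_prod_of_nonneg (fun _ _ => (Real.exp_pos _).le), ← Real.exp_sum,
        Finset.mul_sum, Finset.sum_mul]
      congr 2
      exact Finset.sum_congr rfl fun j _ => by ring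
    simp_rw [this]
    rw [hb_lintegral_pi_prod (fun _ : Fin d => gaussianReal 0 (Real.toNNReal (1 / d)))
      (fun j y => ENNReal.ofReal (Real.exp ((r * v j * g) * y))) (fun _ => by fun_prop)]
    simp_rw [hb_mgf]
    rw [← ENNReal.ofReal_prod_of_nonneg (fun _ _ => (Real.exp_pos _).le), ← Real.exp_sum,
      Finset.mul_sum, Finset.sum_mul]
    congr 2
    refine Finset.sum_congr rfl fun j _ => ?_
    rw [Real.coe_toNNReal _ (by positivity), mul_pow, mul_pow, hr2]
    field_simp
  simp_rw [e2]
  have ha : lam * ∑ j, v j ^ 2 ≤ 0.001 := (mul_le_mul_of_nonneg_left hv hl).trans hK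
  rw [hb_chi _ (by linarith)]
  refine ENNReal.ofReal_le_ofReal ?_
  rw [Real.sqrt_le_left (by norm_num), div_le_iff₀ (by linarith)]
  linarith

lemma hb_markov {ι : Type*} [Fintype ι] (μ : Measure ℝ) [IsProbabilityMeasure μ] (m : ℝ)
    (hm : 0 < m) (hι : 0 < Fintype.card ι)
    (h : ∫⁻ x, ENNReal.ofReal (x ^ 2) ∂μ ≤ ENNReal.ofReal m) :
    ENNReal.ofReal 0.999 ≤ (Measure.pi fun _ : ι => μ)
      {x | ∑ i, x i ^ 2 ≤ 1000 * Fintype.card ι * m} := by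
  set P := (Measure.pi fun _ : ι => μ)
  have hc : (0 : ℝ) < Fintype.card ι := by exact_mod_cast hι
  have hmS : MeasurableSet {x : ι → ℝ | ∑ i, x i ^ 2 ≤ 1000 * Fintype.card ι * m} :=
    measurableSet_le (by fun_prop) measurable_const
  have hE : ∫⁻ x, ENNReal.ofReal (∑ i, x i ^ 2) ∂P ≤ ENNReal.ofReal (Fintype.card ι * m) := by
    have : ∀ x : ι → ℝ, ENNReal.ofReal (∑ i, x i ^ 2) = ∑ i, ENNReal.ofReal (x i ^ 2) := fun x =>
      ENNReal.ofReal_sum_of_nonneg fun i _ => sq_nonneg _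
    simp_rw [this]
    rw [lintegral_finsetSum _ (fun i _ => by fun_prop)]
    calc _ ≤ ∑ i : ι, ENNReal.ofReal m := by
          refine Finset.sum_le_sum fun i _ => ?_
          refine le_trans (le_of_eq ?_) h
          exact (measurePreserving_eval (fun _ : ι => μ) i).lintegral_comp
            (f := fun y => ENNReal.ofReal (y ^ 2)) (by fun_prop)
      _ = _ := by
          rw [← ENNReal.ofReal_sum_of_nonneg (fun _ _ => hm.le)]
          simp
  have hbad : P {x : ι → ℝ | ∑ i, x i ^ 2 ≤ 1000 * Fintype.card ι * m}ᶜ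
      ≤ ENNReal.ofReal 0.001 := by
    have hmk := mul_meas_ge_le_lintegral (μ := P)
      (f := fun x : ι → ℝ => ENNReal.ofReal (∑ i, x i ^ 2)) (by fun_prop)
      (ENNReal.ofReal (1000 * Fintype.card ι * m))
    have hsub : {x : ι → ℝ | ∑ i, x i ^ 2 ≤ 1000 * Fintype.card ι * m}ᶜ
        ⊆ {x | ENNReal.ofReal (1000 * Fintype.card ι * m) ≤ ENNReal.ofReal (∑ i, x i ^ 2)} := by
      intro x hx
      simp only [Set.mem_compl_iff, Set.mem_ofPred_eq, not_le] at hx ⊢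
      exact ENNReal.ofReal_le_ofReal hx.le
    have h3 : ENNReal.ofReal (1000 * Fintype.card ι * m) *
        P {x : ι → ℝ | ∑ i, x i ^ 2 ≤ 1000 * Fintype.card ι * m}ᶜ
        ≤ ENNReal.ofReal (1000 * Fintype.card ι * m) * ENNReal.ofReal 0.001 := by
      refine (mul_le_mul_right (measure_mono hsub) _).trans (hmk.trans (hE.trans (le_of_eq ?_)))
      rw [← ENNReal.ofReal_mul (by positivity)]
      congr 1
      ring
    exact (ENNReal.mul_le_mul_iff_right (by positivity) ENNReal.ofReal_ne_top).1 h3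
  have htot := prob_add_prob_compl (μ := P) hmS
  have : ENNReal.ofReal 0.999 + ENNReal.ofReal 0.001 = 1 := by
    rw [← ENNReal.ofReal_add (by norm_num) (by norm_num)]; norm_num
  rw [← this] at htot
  have h4 := htot.symm.le.trans (add_le_add_right hbad _)
  exact (ENNReal.add_le_add_iff_right ENNReal.ofReal_ne_top).1 h4

lemma hb_gauss_sq (s : NNReal) :
    ∫⁻ x, ENNReal.ofReal (x ^ 2) ∂(gaussianReal 0 s) = ENNReal.ofReal s := by
  have hi : Integrable (fun x : ℝ => x ^ 2) (gaussianReal 0 s) :=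
    (memLp_id_gaussianReal (μ := 0) (v := s) 2).integrable_sq
  rw [← ofReal_integral_eq_lintegral_ofReal hi
    (Filter.Eventually.of_forall fun x => sq_nonneg x)]
  have h := variance_fun_id_gaussianReal (μ := 0) (v := s)
  rw [variance_of_integral_eq_zero (by fun_prop) (by simp)] at h
  rw [h]

lemma hb_label_sq (ε : ℝ) (h0 : 0 < ε) (h1 : ε ≤ 1) :
    ∫⁻ x, ENNReal.ofReal (x ^ 2) ∂(hbNu ε) ≤ ENNReal.ofReal (1 / ε) := by
  have h1' : 0 ≤ 1 - ε := by linarith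
  rw [hbNu_int, ← ENNReal.ofReal_mul h1', ← ENNReal.ofReal_mul h0.le,
    ← ENNReal.ofReal_add (by positivity) (by positivity)]
  refine ENNReal.ofReal_le_ofReal ?_
  have : (1 - ε) * 1 ^ 2 + ε * (-((1 - ε) / ε)) ^ 2 = (1 - ε) / ε := by
    field_simp; ring
  rw [this]
  gcongr; linarith

lemma hb_second_moment (d n : ℕ) (ε α : ℝ) (hd : 0 < d) (h0 : 0 < ε)
    (hεα : ε ≤ α) (hα : α ≤ 1) (hn : (n : ℝ) = (1 / 1000000000) * d * ε ^ 3 / α ^ 4) :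
    ∫⁻ θ in {v : Fin d → ℝ | ∑ j, v j ^ 2 ≤ 1000} ×ˢ
        {W : Fin n → ℝ | ∑ i, W i ^ 2 ≤ 1000 * n / ε},
      ∫⁻ θ' in {v : Fin d → ℝ | ∑ j, v j ^ 2 ≤ 1000} ×ˢ
        {W : Fin n → ℝ | ∑ i, W i ^ 2 ≤ 1000 * n / ε},
      ENNReal.ofReal (Real.exp ((α ^ 2 * ∑ j, θ.1 j * θ'.1 j) * ∑ i, θ.2 i * θ'.2 i))
      ∂((Measure.pi fun _ : Fin d => gaussianReal 0 (Real.toNNReal (1 / d))).prod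
          (Measure.pi fun _ : Fin n => hbNu ε))
      ∂((Measure.pi fun _ : Fin d => gaussianReal 0 (Real.toNNReal (1 / d))).prod
          (Measure.pi fun _ : Fin n => hbNu ε))
    ≤ ENNReal.ofReal 1.005 := by
  have h1 : ε ≤ 1 := hεα.trans hα
  have hα0 : 0 < α := h0.trans_le hεα
  have hp := hbNu_prob ε h0 h1
  set V := (Measure.pi fun _ : Fin d => gaussianReal 0 (Real.toNNReal (1 / d))) with hV
  set N := (Measure.pi fun _ : Fin n => hbNu ε) with hN
  set G1 := {v : Fin d → ℝ | ∑ j, v j ^ 2 ≤ 1000} with hG1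
  set G2 := {W : Fin n → ℝ | ∑ i, W i ^ 2 ≤ 1000 * n / ε} with hG2
  have hmG1 : MeasurableSet G1 := measurableSet_le (by fun_prop) measurable_const
  rw [← Measure.prod_restrict]
  have hm4 : Measurable (fun p : ((Fin d → ℝ) × (Fin n → ℝ)) × ((Fin d → ℝ) × (Fin n → ℝ)) =>
      ENNReal.ofReal (Real.exp ((α ^ 2 * ∑ j, p.1.1 j * p.2.1 j) * ∑ i, p.1.2 i * p.2.2 i))) := by
    fun_prop
  rw [lintegral_prod _ (hm4.lintegral_prod_right').aemeasurable]
  have hinner : ∀ v : Fin d → ℝ, ∫⁻ W in G2, ∫⁻ θ', ENNReal.ofReal (Real.exp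
      ((α ^ 2 * ∑ j, v j * θ'.1 j) * ∑ i, W i * θ'.2 i))
        ∂((V.restrict G1).prod (N.restrict G2)) ∂N
      = ∫⁻ v' in G1, ∫⁻ W in G2, ∫⁻ W' in G2, ENNReal.ofReal (Real.exp
      ((α ^ 2 * ∑ j, v j * v' j) * ∑ i, W i * W' i)) ∂N ∂N ∂V := by
    intro v
    have hm3 : Measurable (fun p : ((Fin n → ℝ) × (Fin d → ℝ)) × (Fin n → ℝ) =>
      ENNReal.ofReal (Real.exp ((α ^ 2 * ∑ j, v j * p.1.2 j) * ∑ i, p.1.1 i * p.2 i))) := by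
      fun_prop
    have hm2 := hm3.lintegral_prod_right' (ν := N.restrict G2)
    refine Eq.trans ?_ (lintegral_lintegral_swap (μ := N.restrict G2) (ν := V.restrict G1)
      (f := fun W v' => ∫⁻ W' in G2, ENNReal.ofReal (Real.exp
        ((α ^ 2 * ∑ j, v j * v' j) * ∑ i, W i * W' i)) ∂N) hm2.aemeasurable)
    refine lintegral_congr fun W => ?_
    rw [lintegral_prod]
    fun_prop
  simp only
  simp_rw [hinner]
  calc _ ≤ ∫⁻ v in G1, ENNReal.ofReal 1.005 ∂V := by
        refine setLIntegral_mono' hmG1 fun v hv => ?_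
        refine le_trans ?_ (hb_gauss_overlap d hd v (1 / 1000000) 1000 (by norm_num) hv (by norm_num))
        refine le_trans (lintegral_mono fun v' => ?_)
          (lintegral_mono' Measure.restrict_le_self le_rfl)
        set s := ∑ j, v j * v' j with hs
        have hα4 : α ^ 4 ≠ 0 := by positivity
        refine hb_label_overlap n ε (α ^ 2 * s) 1000 h0 h1 _ (fun _ => ?_) (fun hts => ?_)
        · have : (n : ℝ) * ((α ^ 2 * s) ^ 2 / ε ^ 2) = (1 / 1000000000) * d * s ^ 2 * ε := by
            rw [hn]; field_simp
          rw [this]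
          have hx : (0 : ℝ) ≤ d * s ^ 2 := by positivity
          nlinarith [mul_le_mul_of_nonneg_left h1 hx]
        · rw [abs_mul, abs_of_nonneg (sq_nonneg α)] at hts ⊢
          have e : α ^ 2 * |s| * (1000 * (n : ℝ) / ε)
              = (1 / 1000000) * (d * |s| / α ^ 2) * ε ^ 2 := by
            rw [hn]; field_simp; ring
          rw [e]
          calc (1 / 1000000) * (d * |s| / α ^ 2) * ε ^ 2
              ≤ (1 / 1000000) * (d * |s| / α ^ 2) * (α ^ 2 * |s|) := by gcongr
            _ = (1 / 1000000) * d * |s| ^ 2 := by field_simp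
            _ = (1 / 1000000) * d * s ^ 2 := by rw [sq_abs]
    _ ≤ ∫⁻ v, ENNReal.ofReal 1.005 ∂V := lintegral_mono' Measure.restrict_le_self le_rfl
    _ = _ := by simp

/-- Let `D₀ = N(0, I_d)^⊗n` and let `D₁` be obtained by drawing
`v ~ N(0, (1/d)·I_d)` and then, conditionally on `v`, drawing `X₁, …, Xₙ` i.i.d. from the
mixture `(1−ε)·N(αv, I_d) + ε·N(−((1−ε)/ε)·αv, I_d)`. There is an absolute constant `c > 0`
such that if `n = c·dε³/α⁴`, `α ≥ ε`, and `c·dε³/α⁴ ≥ √d/α²`, then `d_TV(D₀, D₁) ≤ 0.1`. -/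
theorem huber_lower_bound : ∃ c : ℝ, 0 < c ∧
    ∀ (d n : ℕ) (ε α : ℝ), 0 < d → 0 < n → 0 < ε → ε ≤ α → α ≤ 1 →
      (∃ k : ℕ, (k : ℝ) = ε * n) →
      (n : ℝ) = c * d * ε ^ 3 / α ^ 4 →
      c * d * ε ^ 3 / α ^ 4 ≥ Real.sqrt d / α ^ 2 →
      tvDist
        (Measure.pi fun _ : Fin n => gaussPi d 0)
        ((Measure.pi fun _ : Fin d => gaussianReal 0 (Real.toNNReal (1 / d))).bind
          fun v => Measure.pi fun _ : Fin n =>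
            ENNReal.ofReal (1 - ε) • gaussPi d (α • v) +
              ENNReal.ofReal ε • gaussPi d ((-((1 - ε) / ε) * α) • v))
        ≤ 0.1 := by
  refine ⟨(1 / 1000000000), by norm_num, ?_⟩
  intro d n ε α hd hn h0 hεα hα _ hnc _
  have h1 : ε ≤ 1 := hεα.trans hα
  have hp := hbNu_prob ε h0 h1
  have hd' : (0 : ℝ) < d := by exact_mod_cast hd
  set V := (Measure.pi fun _ : Fin d => gaussianReal 0 (Real.toNNReal (1 / d))) with hV
  set N := (Measure.pi fun _ : Fin n => hbNu ε) with hN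
  set D0 := (Measure.pi fun _ : Fin n => gaussPi d 0) with hD0
  have hVG : ENNReal.ofReal 0.999 ≤ V {v : Fin d → ℝ | ∑ j, v j ^ 2 ≤ 1000} := by
    have := hb_markov (ι := Fin d) (gaussianReal 0 (Real.toNNReal (1 / d))) (1 / d)
      (by positivity) (by simpa using hd)
      (by rw [hb_gauss_sq, Real.coe_toNNReal _ (by positivity)])
    have e : (1000 : ℝ) * Fintype.card (Fin d) * (1 / d) = 1000 := by
      rw [Fintype.card_fin]; field_simp
    rwa [e] at this
  have hNG : ENNReal.ofReal 0.999 ≤ N {W : Fin n → ℝ | ∑ i, W i ^ 2 ≤ 1000 * n / ε} := by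
    have := hb_markov (ι := Fin n) (hbNu ε) (1 / ε)
      (by positivity) (by simpa using hn) (hb_label_sq ε h0 h1)
    have e : (1000 : ℝ) * Fintype.card (Fin n) * (1 / ε) = 1000 * n / ε := by
      rw [Fintype.card_fin]; ring
    rwa [e] at this
  have hG : ENNReal.ofReal 0.998 ≤ (V.prod N) ({v : Fin d → ℝ | ∑ j, v j ^ 2 ≤ 1000} ×ˢ
      {W : Fin n → ℝ | ∑ i, W i ^ 2 ≤ 1000 * n / ε}) := by
    rw [Measure.prod_prod]
    refine le_trans ?_ (mul_le_mul' hVG hNG)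
    rw [← ENNReal.ofReal_mul (by norm_num)]
    exact ENNReal.ofReal_le_ofReal (by norm_num)
  have h2 := hb_second_moment d n ε α hd h0 hεα hα hnc
  simp_rw [← hbL_overlap] at h2
  set D1 := (V.bind fun v => Measure.pi fun _ : Fin n =>
            ENNReal.ofReal (1 - ε) • gaussPi d (α • v) +
              ENNReal.ofReal ε • gaussPi d ((-((1 - ε) / ε) * α) • v)) with hD1
  have hD1A : ∀ A, MeasurableSet A → D1 A = ∫⁻ θ, ∫⁻ x in A, hbL d n α θ x ∂D0 ∂(V.prod N) :=
    fun A hA => hb_bind d n ε α h0 h1 V A hA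
  have hprob : IsProbabilityMeasure D1 := by
    constructor
    rw [hD1A _ MeasurableSet.univ]
    simp_rw [Measure.restrict_univ, hD0, hbL_int]
    simp
  have key : ∀ A, MeasurableSet A → D0.real A ≤ D1.real A + 0.1 := by
    intro A hA
    have := hb_tv_abstract D0 (V.prod N) (hbL d n α) (hbL_meas d n α) (hbL_int d n α) _ hG h2 A hA
    rw [← hD1A A hA, ← ofReal_measureReal, ← ofReal_measureReal,
      ← ENNReal.ofReal_add measureReal_nonneg (by norm_num)] at this
    exact (ENNReal.ofReal_le_ofReal_iff (by positivity)).1 this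
  refine csSup_le ⟨_, ∅, MeasurableSet.empty, rfl⟩ ?_
  rintro x ⟨A, hA, rfl⟩
  have k1 := key A hA
  have k2 := key Aᶜ hA.compl
  rw [probReal_compl_eq_one_sub hA, probReal_compl_eq_one_sub hA] at k2
  change |D0.real A - D1.real A| ≤ 0.1
  rw [abs_le]
  constructor <;> linarith
end

section
/- Fix 0 < ε ≤ α ≤ 1, positive integers n, d with εn an integer, suppose α²n < dε, and set β = (1/n)·(1 − √(1 − α²n/(dε))). Let D₀ = N(0, I_d)^⊗n, and let D₁ be the distribution on (ℝ^d)^n obtained as follows: choose a uniformly random subset A ⊆ [n] of size εn; draw {X_i}_{i∈A} i.i.d. from N(0, I_d); set R_A = Σ_{i∈A} X_i; draw z ~ N(0, (α²/d)·I_d) independently; set μ = −β·R_A − z; and draw {X_i}_{i∉A} i.i.d. from N(μ, I_d). Then there is a sufficiently small absolute constant c > 0 such that if n ≤ c·min(d^{2/3}ε^{2/3}/α^{8/3}, dε/α²) and n ≥ √d/α² + dε³/α⁴, then d_TV(D₀, D₁) ≤ 0.1. -/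
open MeasureTheory ProbabilityTheory
open scoped ENNReal

theorem lintegral_fin_prod_aux {n : ℕ} {E : Type}
    [MeasurableSpace E] {μ : Fin n → Measure E} [∀ i, SigmaFinite (μ i)]
    (f : Fin n → E → ℝ≥0∞) (hf : ∀ i, Measurable (f i)) :
    ∫⁻ x : Fin n → E, ∏ i, f i (x i) ∂(Measure.pi μ) = ∏ i, ∫⁻ x, f i x ∂(μ i) := by
  induction n with
  | zero => simp
  | succ n n_ih =>
      calc
        _ = ∫⁻ x : E × (Fin n → E),
            f 0 x.1 * ∏ i : Fin n, f (Fin.succ i) (x.2 i)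
            ∂((μ 0).prod (Measure.pi (fun i ↦ μ i.succ))) := by
          rw [← ((measurePreserving_piFinSuccAbove μ 0).symm).lintegral_comp_emb
            (MeasurableEquiv.measurableEmbedding _)]
          refine lintegral_congr fun x => ?_
          simp [MeasurableEquiv.piFinSuccAbove_symm_apply, Fin.insertNthEquiv,
            Fin.prod_univ_succ]
        _ = (∫⁻ x, f 0 x ∂μ 0)
            * ∏ i : Fin n, ∫⁻ x, f (Fin.succ i) x ∂(μ i.succ) := by
          rw [← n_ih _ (fun i => hf _)]
          refine lintegral_prod_mul (g := fun x : Fin n → E => ∏ i : Fin n, f i.succ (x i)) (hf 0).aemeasurable ?_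
          exact (Finset.measurable_prod _ fun i _ => (hf _).comp (measurable_pi_apply i)).aemeasurable
        _ = ∏ i, ∫⁻ x, f i x ∂(μ i) := by rw [Fin.prod_univ_succ]

theorem pi_withDensity_fin {n : ℕ} {E : Type}
    [MeasurableSpace E] {μ : Fin n → Measure E} [∀ i, SigmaFinite (μ i)]
    (f : Fin n → E → ℝ≥0∞) (hf : ∀ i, Measurable (f i))
    [∀ i, SigmaFinite ((μ i).withDensity (f i))] :
    Measure.pi (fun i => (μ i).withDensity (f i))
      = (Measure.pi μ).withDensity (fun x => ∏ i, f i (x i)) := by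
  refine Measure.pi_eq fun s hs => ?_
  rw [withDensity_apply _ (MeasurableSet.univ_pi hs), ← lintegral_indicator (MeasurableSet.univ_pi hs)]
  have : ∀ x : Fin n → E, (Set.univ.pi s).indicator (fun x => ∏ i, f i (x i)) x
      = ∏ i, (s i).indicator (f i) (x i) := by
    intro x
    by_cases h : x ∈ Set.univ.pi s
    · rw [Set.indicator_of_mem h]
      refine Finset.prod_congr rfl fun i _ => ?_
      rw [Set.indicator_of_mem (h i trivial)]
    · rw [Set.indicator_of_notMem h]
      simp only [Set.mem_pi, Set.mem_univ, forall_true_left, not_forall] at h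
      obtain ⟨i, hi⟩ := h
      symm
      apply Finset.prod_eq_zero (Finset.mem_univ i)
      rw [Set.indicator_of_notMem hi]
  simp_rw [this]
  rw [lintegral_fin_prod_aux _ fun i => (hf i).indicator (hs i)]
  refine Finset.prod_congr rfl fun i _ => ?_
  rw [withDensity_apply _ (hs i), lintegral_indicator (hs i)]

theorem pi_swap_map (n d : ℕ) (γ : Measure ℝ) [IsProbabilityMeasure γ] :
    (Measure.pi fun _ : Fin n => Measure.pi fun _ : Fin d => γ).map
      (fun X j i => X i j) = Measure.pi fun _ : Fin d => Measure.pi fun _ : Fin n => γ := by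
  have h1 := Measure.infinitePi_map_curry (fun (_ : Fin n) (_ : Fin d) => γ)
  have h2 := Measure.infinitePi_map_curry (fun (_ : Fin d) (_ : Fin n) => γ)
  simp only [Measure.infinitePi_eq_pi] at h1 h2
  rw [← h1, ← h2, Measure.map_map (by fun_prop) (by fun_prop)]
  have h3 := (measurePreserving_piCongrLeft (fun _ : Fin d × Fin n => γ) (Equiv.prodComm (Fin n) (Fin d))).map_eq
  rw [← h3, Measure.map_map (by fun_prop) (by fun_prop)]
  congr 1

theorem lintegral_swap_prod (n d : ℕ) (γ : Measure ℝ) [IsProbabilityMeasure γ]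
    (f : (Fin n → ℝ) → ℝ≥0∞) (hf : Measurable f) :
    ∫⁻ X, ∏ j : Fin d, f (fun i => X i j) ∂(Measure.pi fun _ : Fin n => Measure.pi fun _ : Fin d => γ)
      = (∫⁻ x, f x ∂(Measure.pi fun _ : Fin n => γ)) ^ d := by
  have h : ∫⁻ X, ∏ j : Fin d, f (X j) ∂(Measure.pi fun _ : Fin d => Measure.pi fun _ : Fin n => γ)
      = (∫⁻ x, f x ∂(Measure.pi fun _ : Fin n => γ)) ^ d := by
    rw [lintegral_fin_prod_aux (fun _ => f) (fun _ => hf)]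
    simp
  rw [← h, ← pi_swap_map, lintegral_map]
  · exact Finset.measurable_prod _ fun i _ => hf.comp (by fun_prop)
  · fun_prop

theorem tv_le_of_sq {Ω : Type*} [MeasurableSpace Ω] (P : Measure Ω) [IsProbabilityMeasure P]
    (L : Ω → ℝ≥0∞) (hL : Measurable L) (h1 : ∫⁻ x, L x ∂P = 1)
    (h2 : ∫⁻ x, L x * L x ∂P ≤ ENNReal.ofReal 1.01) :
    ∀ A, MeasurableSet A → |(P A).toReal - (P.withDensity L A).toReal| ≤ 0.1 := by
  intro A hA
  have hfin : ∀ᵐ x ∂P, L x < ⊤ := ae_lt_top hL (by simp [h1])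
  set l : Ω → ℝ := fun x => (L x).toReal with hl
  have hlm : Measurable l := hL.ennreal_toReal
  have hint : Integrable l P := integrable_toReal_of_lintegral_ne_top hL.aemeasurable (by simp [h1])
  have hint1 : ∫ x, l x ∂P = 1 := by
    rw [integral_toReal hL.aemeasurable hfin, h1]; simp
  have hsq : (fun x => l x ^ 2) = fun x => (L x * L x).toReal := by
    funext x; simp [hl, sq]
  have h2' : ∫⁻ x, L x * L x ∂P ≠ ⊤ := ne_top_of_le_ne_top ENNReal.ofReal_ne_top h2
  have hint2 : Integrable (fun x => l x ^ 2) P := by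
    rw [hsq]; exact integrable_toReal_of_lintegral_ne_top (hL.mul hL).aemeasurable h2'
  have hint3 : ∫ x, l x ^ 2 ∂P ≤ 1.01 := by
    rw [hsq, integral_toReal (f := fun x => L x * L x) (hL.mul hL).aemeasurable (ae_lt_top (hL.mul hL) h2')]
    exact ENNReal.toReal_le_of_le_ofReal (by norm_num) h2
  have hmem : MemLp (fun x => 1 - l x) 2 P := by
    rw [memLp_two_iff_integrable_sq (by fun_prop)]
    have : (fun x => (1 - l x) ^ 2) = fun x => (1 - 2 * l x) + l x ^ 2 := by funext x; ring
    rw [this]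
    exact ((integrable_const _).sub (hint.const_mul 2)).add hint2
  have hPA : (P A).toReal - (P.withDensity L A).toReal = ∫ x in A, (1 - l x) ∂P := by
    rw [withDensity_apply _ hA, integral_sub (integrable_const _) hint.integrableOn,
      integral_toReal hL.aemeasurable (ae_restrict_of_ae hfin)]
    simp [Measure.real]
  rw [hPA]
  have e1 : |∫ x in A, (1 - l x) ∂P| ≤ ∫ x, |1 - l x| ∂P := by
    refine abs_integral_le_integral_abs.trans ?_
    exact setIntegral_le_integral ((integrable_const _).sub hint).abs (Filter.Eventually.of_forall fun _ => abs_nonneg _)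
  have e2 : (∫ x, |1 - l x| ∂P) ^ 2 ≤ ∫ x, (1 - l x) ^ 2 ∂P := by
    have hv := variance_nonneg (fun x => |1 - l x|) P
    rw [variance_eq_sub (show MemLp (fun x => |1 - l x|) 2 P from hmem.abs)] at hv
    simp only [Pi.pow_apply, sq_abs] at hv
    linarith
  have e3 : ∫ x, (1 - l x) ^ 2 ∂P = 1 - 2 * 1 + ∫ x, l x ^ 2 ∂P := by
    have : (fun x => (1 - l x) ^ 2) = fun x => (1 - 2 * l x) + l x ^ 2 := by funext x; ring
    rw [this, integral_add (f := fun x => 1 - 2 * l x) ((integrable_const _).sub (hint.const_mul 2)) hint2,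
      integral_sub (integrable_const _) (hint.const_mul 2), integral_const_mul, hint1]
    simp
  have e4 : 0 ≤ ∫ x, |1 - l x| ∂P := integral_nonneg fun _ => abs_nonneg _
  nlinarith

theorem gauss_pi_eq_withDensity (m : ℕ) :
    (Measure.pi fun _ : Fin m => gaussianReal 0 1)
      = (volume : Measure (Fin m → ℝ)).withDensity (fun y => ∏ i, gaussianPDF 0 1 (y i)) := by
  have h : gaussianReal 0 1 = volume.withDensity (gaussianPDF 0 1) :=
    gaussianReal_of_var_ne_zero 0 one_ne_zero
  have : SigmaFinite (volume.withDensity (gaussianPDF 0 1)) := by rw [← h]; infer_instance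
  rw [h, pi_withDensity_fin (fun _ => gaussianPDF 0 1) (fun _ => measurable_gaussianPDF _ _)]
  rfl

theorem prod_gaussianPDF (m : ℕ) (y : Fin m → ℝ) :
    ∏ i, gaussianPDF 0 1 (y i)
      = ENNReal.ofReal ((Real.sqrt (2 * Real.pi))⁻¹ ^ m * Real.exp (-(y ⬝ᵥ y) / 2)) := by
  simp only [gaussianPDF, gaussianPDFReal]
  rw [← ENNReal.ofReal_prod_of_nonneg (fun i _ => by positivity)]
  congr 1
  rw [Finset.prod_mul_distrib, ← Real.exp_sum]
  simp [dotProduct, Finset.sum_div, neg_div, sq]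

open scoped MatrixOrder in
theorem gauss_quad (m : ℕ) (M : Matrix (Fin m) (Fin m) ℝ) (hM : M.PosDef) :
    ∫⁻ y, ENNReal.ofReal (Real.exp ((y ⬝ᵥ y) / 2 - (y ⬝ᵥ (M.mulVec y)) / 2))
      ∂(Measure.pi fun _ : Fin m => gaussianReal 0 1) = ENNReal.ofReal (1 / Real.sqrt M.det) := by
  obtain ⟨B, hB⟩ := CStarAlgebra.nonneg_iff_eq_star_mul_self.mp hM.posSemidef.nonneg
  have hBt : M = B.transpose * B := by rw [hB, Matrix.star_eq_conjTranspose]; simp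
  have hdet : M.det = B.det ^ 2 := by rw [hBt]; simp [sq]
  have hpos : 0 < M.det := hM.det_pos
  have hB0 : B.det ≠ 0 := by
    intro h; rw [hdet, h] at hpos; simp at hpos
  rw [gauss_pi_eq_withDensity, lintegral_withDensity_eq_lintegral_mul]
  rotate_left
  · exact Finset.measurable_prod _ fun i _ => (measurable_gaussianPDF _ _).comp (measurable_pi_apply i)
  · simp only [dotProduct, Matrix.mulVec]
    fun_prop
  have key : ∀ y : Fin m → ℝ, ((fun y : Fin m → ℝ => ∏ i, gaussianPDF 0 1 (y i)) *
      fun y => ENNReal.ofReal (Real.exp ((y ⬝ᵥ y) / 2 - (y ⬝ᵥ (M.mulVec y)) / 2))) y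
      = (fun u : Fin m → ℝ => ∏ i, gaussianPDF 0 1 (u i)) (Matrix.toLin' B y) := by
    intro y
    simp only [Pi.mul_apply, prod_gaussianPDF]
    rw [← ENNReal.ofReal_mul (by positivity), mul_assoc, ← Real.exp_add]
    congr 3
    have : Matrix.toLin' B y ⬝ᵥ Matrix.toLin' B y = y ⬝ᵥ M.mulVec y := by
      rw [hBt, Matrix.toLin'_apply, ← Matrix.mulVec_mulVec, Matrix.dotProduct_mulVec y,
        Matrix.vecMul_transpose]
    rw [this]; ring
  simp_rw [key]
  have hmeas : Measurable (fun u : Fin m → ℝ => ∏ i, gaussianPDF 0 1 (u i)) :=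
    Finset.measurable_prod _ fun i _ => (measurable_gaussianPDF _ _).comp (measurable_pi_apply i)
  rw [← lintegral_map (μ := volume) hmeas
    (show Measurable (Matrix.toLin' B) from (LinearMap.continuous_of_finiteDimensional _).measurable),
    Real.map_matrix_volume_pi_eq_smul_volume_pi hB0, lintegral_smul_measure]
  have h1 : ∫⁻ u : Fin m → ℝ, ∏ i, gaussianPDF 0 1 (u i) = 1 := by
    have := gauss_pi_eq_withDensity m
    have h2 := congrArg (fun ν : Measure (Fin m → ℝ) => ν Set.univ) this
    simp only [measure_univ, withDensity_apply _ MeasurableSet.univ, Measure.restrict_univ] at h2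
    exact h2.symm
  rw [h1, hdet, Real.sqrt_sq_eq_abs]
  simp [abs_inv]

theorem gauss_four (N : ℕ) (a b a' b' : Fin N → ℝ) (ν p q r1 r2 r3 : ℝ)
    (hν : 0 ≤ ν)
    (haa : a ⬝ᵥ a = p) (haa' : a' ⬝ᵥ a' = p) (hbb : b ⬝ᵥ b = q) (hbb' : b' ⬝ᵥ b' = q)
    (hab : a ⬝ᵥ b = 0) (hab' : a' ⬝ᵥ b' = 0)
    (h1 : a ⬝ᵥ a' = r1) (h2 : a ⬝ᵥ b' = r2) (h2' : b ⬝ᵥ a' = r2) (h3 : b ⬝ᵥ b' = r3)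
    (hpq : p * q ≤ 1 / 64) :
    ∫⁻ y, ENNReal.ofReal (Real.exp ((a ⬝ᵥ y) * (b ⬝ᵥ y) - ν * (a ⬝ᵥ y) ^ 2 / 2
        + ((a' ⬝ᵥ y) * (b' ⬝ᵥ y) - ν * (a' ⬝ᵥ y) ^ 2 / 2)))
      ∂(Measure.pi fun _ : Fin N => gaussianReal 0 1)
    = ENNReal.ofReal (1 / Real.sqrt (
        ((1 + ν * p + (ν * r1 - r2)) * (1 - r2) - (q + (r3 - ν * r2)) * (p + r1)) *
        ((1 + ν * p - (ν * r1 - r2)) * (1 + r2) - (q - (r3 - ν * r2)) * (p - r1)))) := by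
  let F : Matrix (Fin 4) (Fin N) ℝ := Matrix.of ![a, b, a', b']
  let W : Matrix (Fin 4) (Fin 4) ℝ := !![-ν, 1, 0, 0; 1, 0, 0, 0; 0, 0, -ν, 1; 0, 0, 1, 0]
  let M : Matrix (Fin N) (Fin N) ℝ := 1 - F.transpose * (W * F)
  have hquad : ∀ y, y ⬝ᵥ M.mulVec y = y ⬝ᵥ y - 2 * ((a ⬝ᵥ y) * (b ⬝ᵥ y) - ν * (a ⬝ᵥ y) ^ 2 / 2
        + ((a' ⬝ᵥ y) * (b' ⬝ᵥ y) - ν * (a' ⬝ᵥ y) ^ 2 / 2)) := by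
    intro y
    have hF : F.mulVec y = ![a ⬝ᵥ y, b ⬝ᵥ y, a' ⬝ᵥ y, b' ⬝ᵥ y] := by
      ext i; fin_cases i <;> rfl
    have : y ⬝ᵥ M.mulVec y = y ⬝ᵥ y - (F.mulVec y) ⬝ᵥ W.mulVec (F.mulVec y) := by
      simp only [M, Matrix.sub_mulVec, Matrix.one_mulVec, dotProduct_sub]
      rw [← Matrix.mulVec_mulVec, Matrix.dotProduct_mulVec y, Matrix.vecMul_transpose,
        ← Matrix.mulVec_mulVec]
    rw [this, hF]
    simp [W, Matrix.mulVec, dotProduct, Fin.sum_univ_succ]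
    ring
  have hMdet : M.det = ((1 + ν * p + (ν * r1 - r2)) * (1 - r2) - (q + (r3 - ν * r2)) * (p + r1)) *
        ((1 + ν * p - (ν * r1 - r2)) * (1 + r2) - (q - (r3 - ν * r2)) * (p - r1)) := by
    have hG : F * F.transpose = !![p, 0, r1, r2; 0, q, r2, r3; r1, r2, p, 0; r2, r3, 0, q] := by
      ext i j
      have : (F * F.transpose) i j = ![a, b, a', b'] i ⬝ᵥ ![a, b, a', b'] j := rfl
      rw [this]
      fin_cases i <;> fin_cases j <;> simp [F, *, dotProduct_comm b a, dotProduct_comm b' a',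
        dotProduct_comm a' a, dotProduct_comm b' a, dotProduct_comm a' b, dotProduct_comm b' b]
    rw [show M.det = (1 - F.transpose * (W * F)).det from rfl, Matrix.det_one_sub_mul_comm,
      Matrix.mul_assoc, hG]
    have hWG : (1 : Matrix (Fin 4) (Fin 4) ℝ) - W * !![p, 0, r1, r2; 0, q, r2, r3; r1, r2, p, 0; r2, r3, 0, q]
      = !![1 + ν * p, -q, ν * r1 - r2, ν * r2 - r3; -p, 1, -r1, -r2;
           ν * r1 - r2, ν * r2 - r3, 1 + ν * p, -q; -r1, -r2, -p, 1] := by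
      ext i j
      fin_cases i <;> fin_cases j <;> simp [W, Matrix.mul_apply, Fin.sum_univ_succ] <;> ring
    rw [hWG]
    simp [Matrix.det_succ_row_zero, Fin.sum_univ_succ, Fin.succAbove]
    ring
  have dsn : ∀ u : Fin N → ℝ, 0 ≤ u ⬝ᵥ u := fun u =>
    Finset.sum_nonneg fun i _ => mul_self_nonneg (u i)
  have hp0 : 0 ≤ p := haa ▸ dsn a
  have hq0 : 0 ≤ q := hbb ▸ dsn b
  have CS : ∀ u v : Fin N → ℝ, (u ⬝ᵥ v) ^ 2 ≤ (u ⬝ᵥ u) * (v ⬝ᵥ v) := by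
    intro u v
    have := Finset.sum_mul_sq_le_sq_mul_sq Finset.univ u v
    simpa [dotProduct, sq] using this
  have bound : ∀ (u v y : Fin N → ℝ), u ⬝ᵥ u = p → v ⬝ᵥ v = q →
      (u ⬝ᵥ y) * (v ⬝ᵥ y) ≤ (y ⬝ᵥ y) / 8 := by
    intro u v y hu hv
    have e1 := CS u y
    have e2 := CS v y
    rw [hu] at e1
    rw [hv] at e2
    have hy0 : 0 ≤ y ⬝ᵥ y := dsn y
    apply abs_le_of_sq_le_sq' _ (by positivity) |>.2
    rw [mul_pow]
    calc (u ⬝ᵥ y) ^ 2 * (v ⬝ᵥ y) ^ 2 ≤ (p * (y ⬝ᵥ y)) * (q * (y ⬝ᵥ y)) := by gcongr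
      _ = (p * q) * (y ⬝ᵥ y) ^ 2 := by ring
      _ ≤ (1 / 64) * (y ⬝ᵥ y) ^ 2 := by gcongr
      _ = _ := by ring
  have hMpd : M.PosDef := by
    apply Matrix.PosDef.of_dotProduct_mulVec_pos
    · have hW : W.transpose = W := by
        ext i j; fin_cases i <;> fin_cases j <;> rfl
      unfold Matrix.IsHermitian
      rw [Matrix.conjTranspose_eq_transpose_of_trivial]
      simp only [M, Matrix.transpose_sub, Matrix.transpose_mul, Matrix.transpose_transpose,
        Matrix.transpose_one, hW, Matrix.mul_assoc]
    · intro y hy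
      rw [star_trivial, hquad]
      have hy0 : 0 < y ⬝ᵥ y := by
        have := dsn y
        rcases this.lt_or_eq with h | h
        · exact h
        · exact absurd (dotProduct_self_eq_zero.mp h.symm) hy
      have b1 := bound a b y haa hbb
      have b2 := bound a' b' y haa' hbb'
      have : 0 ≤ ν * (a ⬝ᵥ y) ^ 2 := by positivity
      have : 0 ≤ ν * (a' ⬝ᵥ y) ^ 2 := by positivity
      linarith
  rw [← hMdet, ← gauss_quad N M hMpd]
  refine lintegral_congr fun y => ?_
  rw [hquad]
  congr 2
  ring

/-- One-coordinate exponent. -/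
noncomputable def expo {n : ℕ} (A : Finset (Fin n)) (β : ℝ) (x : Fin n → ℝ) (z : ℝ) : ℝ :=
  ∑ i ∈ Aᶜ, ((-(β * ∑ j ∈ A, x j) - z) * x i - (-(β * ∑ j ∈ A, x j) - z) ^ 2 / 2)

/-- One-coordinate likelihood ratio. -/
noncomputable def ell {n : ℕ} (A : Finset (Fin n)) (β : ℝ) (v : NNReal) (x : Fin n → ℝ) : ℝ≥0∞ :=
  ∫⁻ z, ENNReal.ofReal (Real.exp (expo A β x z)) ∂(gaussianReal 0 v)

theorem measurable_expo {n : ℕ} (A : Finset (Fin n)) (β : ℝ) :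
    Measurable (fun q : (Fin n → ℝ) × ℝ => expo A β q.1 q.2) := by
  unfold expo
  fun_prop

theorem measurable_ell {n : ℕ} (A : Finset (Fin n)) (β : ℝ) (v : NNReal) :
    Measurable (ell A β v) := by
  have h := (measurable_expo A β).exp.ennreal_ofReal
  exact h.lintegral_prod_right'

theorem lintegral_cons (m : ℕ) (f : (Fin (m + 1) → ℝ) → ℝ≥0∞) (hf : Measurable f) :
    ∫⁻ y, f y ∂(Measure.pi fun _ : Fin (m + 1) => gaussianReal 0 1)
      = ∫⁻ x, ∫⁻ z, f (Fin.cons z x) ∂(gaussianReal 0 1) ∂(Measure.pi fun _ : Fin m => gaussianReal 0 1) := by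
  have hmp := (measurePreserving_piFinSuccAbove (fun _ : Fin (m + 1) => gaussianReal 0 1) 0).symm
  have hcons : Measurable (fun q : ℝ × (Fin m → ℝ) => (Fin.cons q.1 q.2 : Fin (m + 1) → ℝ)) := by
    rw [measurable_pi_iff]
    intro i
    refine Fin.cases ?_ (fun i => ?_) i
    · simp; fun_prop
    · simp; fun_prop
  rw [← lintegral_prod_symm' (fun q : ℝ × (Fin m → ℝ) => f (Fin.cons q.1 q.2)) (hf.comp hcons)]
  rw [← hmp.lintegral_comp_emb (MeasurableEquiv.measurableEmbedding _)]
  refine lintegral_congr fun x => ?_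
  simp [MeasurableEquiv.piFinSuccAbove_symm_apply, Fin.insertNthEquiv]

theorem card_facts {n k : ℕ} (A A' : Finset (Fin n)) (hA : A.card = k) (hA' : A'.card = k) :
    ((A ∩ A'ᶜ).card : ℝ) = k - (A ∩ A').card ∧ ((Aᶜ ∩ A').card : ℝ) = k - (A ∩ A').card ∧
    ((Aᶜ ∩ A'ᶜ).card : ℝ) = n - 2 * k + (A ∩ A').card ∧ ((Aᶜ).card : ℝ) = n - k := by
  have h1 : (A ∩ A').card + (A ∩ A'ᶜ).card = k := by
    rw [← hA, ← Finset.sdiff_eq_inter_compl, Finset.card_inter_add_card_sdiff]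
  have h2 : (A ∩ A').card + (Aᶜ ∩ A').card = k := by
    rw [← hA', Finset.inter_comm A, Finset.inter_comm Aᶜ, ← Finset.sdiff_eq_inter_compl,
      Finset.card_inter_add_card_sdiff]
  have h3 : (Aᶜ ∩ A').card + (Aᶜ ∩ A'ᶜ).card = Aᶜ.card := by
    rw [← Finset.sdiff_eq_inter_compl, Finset.card_inter_add_card_sdiff]
  have h4 : A.card + Aᶜ.card = n := by rw [Finset.card_add_card_compl]; simp
  rw [hA] at h4
  have h1' : ((A ∩ A').card : ℝ) + (A ∩ A'ᶜ).card = k := by exact_mod_cast h1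
  have h2' : ((A ∩ A').card : ℝ) + (Aᶜ ∩ A').card = k := by exact_mod_cast h2
  have h3' : ((Aᶜ ∩ A').card : ℝ) + (Aᶜ ∩ A'ᶜ).card = Aᶜ.card := by exact_mod_cast h3
  have h4' : (k : ℝ) + Aᶜ.card = n := by exact_mod_cast h4
  refine ⟨?_, ?_, ?_, ?_⟩ <;> linarith

theorem sum_ind {n : ℕ} (A B : Finset (Fin n)) (s t : ℝ) :
    ∑ i, (if i ∈ A then s else 0) * (if i ∈ B then t else 0) = s * t * (A ∩ B).card := by
  have : ∀ i, (if i ∈ A then s else 0) * (if i ∈ B then t else 0)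
      = if i ∈ A ∩ B then s * t else 0 := by
    intro i
    by_cases h1 : i ∈ A <;> by_cases h2 : i ∈ B <;> simp [h1, h2]
  simp_rw [this]
  rw [Finset.sum_ite_mem]
  simp [mul_comm]

theorem gauss_scale (v : NNReal) (f : ℝ → ℝ≥0∞) (hf : Measurable f) :
    ∫⁻ z, f z ∂(gaussianReal 0 v) = ∫⁻ z, f (Real.sqrt v * z) ∂(gaussianReal 0 1) := by
  have h := gaussianReal_map_const_mul (μ := 0) (v := 1) (Real.sqrt v)
  have h2 : NNReal.mk (Real.sqrt v ^ 2) (sq_nonneg _) * 1 = v := by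
    ext; simp [Real.sq_sqrt]
  rw [h2, mul_zero] at h
  rw [← h, lintegral_map hf (by fun_prop)]

theorem ell_second_moment {n k : ℕ} (A A' : Finset (Fin n)) (hA : A.card = k) (hA' : A'.card = k)
    (β ε : ℝ) (v : NNReal) (hk : (k : ℝ) = ε * n) (hv : (v : ℝ) + β ^ 2 * k = 2 * β * ε)
    (hpq : 2 * β * ε * (n - k) ≤ 1 / 64) :
    ∫⁻ x, ell A β v x * ell A' β v x ∂(Measure.pi fun _ : Fin n => gaussianReal 0 1)
      = ENNReal.ofReal (1 / Real.sqrt (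
        (1 - β ^ 2 * n * ((A ∩ A').card - ε ^ 2 * n)) ^ 2
          - β ^ 2 * (2 * ε ^ 2 * (1 - ε) * n - 2 * (1 + ε) * ((A ∩ A').card - ε ^ 2 * n)) ^ 2)) := by
  obtain ⟨c1, c2, c3, c4⟩ := card_facts A A' hA hA'
  have c5 := (card_facts A' A hA' hA).2.2.2
  set σ := Real.sqrt v with hσ
  have hσ2 : σ * σ = v := Real.mul_self_sqrt v.2
  let a : Fin (n + 2) → ℝ := Fin.cons (-σ) (Fin.cons 0 (fun i => if i ∈ A then -β else 0))
  let b : Fin (n + 2) → ℝ := Fin.cons 0 (Fin.cons 0 (fun i => if i ∈ Aᶜ then 1 else 0))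
  let a' : Fin (n + 2) → ℝ := Fin.cons 0 (Fin.cons (-σ) (fun i => if i ∈ A' then -β else 0))
  let b' : Fin (n + 2) → ℝ := Fin.cons 0 (Fin.cons 0 (fun i => if i ∈ A'ᶜ then 1 else 0))
  have hν : (0 : ℝ) ≤ n - k := by rw [← c4]; positivity
  have key := gauss_four (n + 2) a b a' b' (n - k) (2 * β * ε) (n - k)
    (β ^ 2 * (A ∩ A').card) (-β * (k - (A ∩ A').card)) (n - 2 * k + (A ∩ A').card) hν
    (by simp only [a, dotProduct, Fin.sum_univ_succ, Fin.cons_zero, Fin.cons_succ, sum_ind,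
          Finset.inter_self, hA]; rw [← hv, ← hσ2]; ring)
    (by simp only [a', dotProduct, Fin.sum_univ_succ, Fin.cons_zero, Fin.cons_succ, sum_ind,
          Finset.inter_self, hA']; rw [← hv, ← hσ2]; ring)
    (by simp only [b, dotProduct, Fin.sum_univ_succ, Fin.cons_zero, Fin.cons_succ, sum_ind,
          Finset.inter_self, c4]; ring)
    (by simp only [b', dotProduct, Fin.sum_univ_succ, Fin.cons_zero, Fin.cons_succ, sum_ind,
          Finset.inter_self, c5]; ring)
    (by simp only [a, b, dotProduct, Fin.sum_univ_succ, Fin.cons_zero, Fin.cons_succ, sum_ind,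
          Finset.inter_compl, Finset.card_empty]; simp)
    (by simp only [a', b', dotProduct, Fin.sum_univ_succ, Fin.cons_zero, Fin.cons_succ, sum_ind,
          Finset.inter_compl, Finset.card_empty]; simp)
    (by simp only [a, a', dotProduct, Fin.sum_univ_succ, Fin.cons_zero, Fin.cons_succ, sum_ind]; ring)
    (by simp only [a, b', dotProduct, Fin.sum_univ_succ, Fin.cons_zero, Fin.cons_succ, sum_ind, c1]; ring)
    (by simp only [b, a', dotProduct, Fin.sum_univ_succ, Fin.cons_zero, Fin.cons_succ, sum_ind, c2]; ring)
    (by simp only [b, b', dotProduct, Fin.sum_univ_succ, Fin.cons_zero, Fin.cons_succ, sum_ind, c3]; ring)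
    hpq
  have hdet : ∀ r : ℝ, ((1 + (n - k) * (2 * β * ε) + ((n - k) * (β ^ 2 * r) - (-β * (k - r)))) * (1 - (-β * (k - r)))
      - ((n - k) + ((n - 2 * k + r) - (n - k) * (-β * (k - r)))) * (2 * β * ε + β ^ 2 * r)) *
      ((1 + (n - k) * (2 * β * ε) - ((n - k) * (β ^ 2 * r) - (-β * (k - r)))) * (1 + (-β * (k - r)))
      - ((n - k) - ((n - 2 * k + r) - (n - k) * (-β * (k - r)))) * (2 * β * ε - β ^ 2 * r))
      = (1 - β ^ 2 * n * (r - ε ^ 2 * n)) ^ 2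
          - β ^ 2 * (2 * ε ^ 2 * (1 - ε) * n - 2 * (1 + ε) * (r - ε ^ 2 * n)) ^ 2 := by
    intro r
    rw [hk]; ring
  rw [hdet] at key
  rw [← key, lintegral_cons, lintegral_cons]
  rotate_left
  · apply Measurable.lintegral_prod_right' (f := fun q : (Fin (n + 1) → ℝ) × ℝ => ENNReal.ofReal (Real.exp (
      a ⬝ᵥ (Fin.cons q.2 q.1 : Fin (n + 2) → ℝ) * b ⬝ᵥ (Fin.cons q.2 q.1 : Fin (n + 2) → ℝ)
        - (n - k) * (a ⬝ᵥ (Fin.cons q.2 q.1 : Fin (n + 2) → ℝ)) ^ 2 / 2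
      + (a' ⬝ᵥ (Fin.cons q.2 q.1 : Fin (n + 2) → ℝ) * b' ⬝ᵥ (Fin.cons q.2 q.1 : Fin (n + 2) → ℝ)
        - (n - k) * (a' ⬝ᵥ (Fin.cons q.2 q.1 : Fin (n + 2) → ℝ)) ^ 2 / 2))))
    simp only [dotProduct, Fin.sum_univ_succ (n := n + 1), Fin.cons_zero, Fin.cons_succ]
    fun_prop
  · simp only [dotProduct]
    fun_prop
  refine lintegral_congr fun x => ?_
  have m1 : ∀ A : Finset (Fin n), Measurable fun z => ENNReal.ofReal (Real.exp (expo A β x z)) := by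
    intro A; unfold expo; fun_prop
  unfold ell
  rw [gauss_scale v _ (m1 A), gauss_scale v _ (m1 A'), mul_comm, ← lintegral_mul_const]
  swap
  · unfold expo; fun_prop
  refine lintegral_congr fun z' => ?_
  rw [← lintegral_const_mul]
  swap
  · unfold expo; fun_prop
  refine lintegral_congr fun z => ?_
  rw [← ENNReal.ofReal_mul (Real.exp_nonneg _), ← Real.exp_add]
  congr 2
  have e : ∀ (A : Finset (Fin n)) (z : ℝ), (Aᶜ.card : ℝ) = n - k → expo A β x (σ * z)
      = (-(β * ∑ j ∈ A, x j) - σ * z) * (∑ i ∈ Aᶜ, x i)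
        - (n - k) * (-(β * ∑ j ∈ A, x j) - σ * z) ^ 2 / 2 := by
    intro A z hc
    unfold expo
    rw [Finset.sum_sub_distrib, ← Finset.mul_sum, Finset.sum_const, nsmul_eq_mul, hc]
    ring
  rw [← hσ, e A z c4, e A' z' c5]
  simp only [a, b, a', b', dotProduct, Fin.sum_univ_succ, Fin.cons_zero, Fin.cons_succ, ite_mul, zero_mul,
    Finset.sum_ite_mem, Finset.univ_inter, one_mul, ← Finset.mul_sum]
  ring

instance gaussPi_prob (d : ℕ) (μ : Fin d → ℝ) : IsProbabilityMeasure (gaussPi d μ) := by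
  unfold gaussPi; infer_instance

theorem gaussianReal_shift (m : ℝ) :
    gaussianReal m 1 = (gaussianReal 0 1).withDensity
      (fun x => ENNReal.ofReal (Real.exp (m * x - m ^ 2 / 2))) := by
  rw [gaussianReal_of_var_ne_zero _ one_ne_zero, gaussianReal_of_var_ne_zero _ one_ne_zero,
    ← withDensity_mul _ (measurable_gaussianPDF _ _) (by fun_prop)]
  congr 1
  ext x
  simp only [Pi.mul_apply, gaussianPDF, gaussianPDFReal]
  rw [← ENNReal.ofReal_mul (by positivity), mul_assoc, mul_assoc, ← Real.exp_add]
  congr 3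
  simp
  ring

theorem gaussPi_shift (d : ℕ) (μ : Fin d → ℝ) :
    gaussPi d μ = (gaussPi d 0).withDensity
      (fun x => ∏ j, ENNReal.ofReal (Real.exp (μ j * x j - μ j ^ 2 / 2))) := by
  have : ∀ j, SigmaFinite ((gaussianReal 0 1).withDensity
      (fun x => ENNReal.ofReal (Real.exp (μ j * x - μ j ^ 2 / 2)))) := by
    intro j; rw [← gaussianReal_shift]; infer_instance
  unfold gaussPi
  simp_rw [gaussianReal_shift (μ _)]
  rw [pi_withDensity_fin (fun j x => ENNReal.ofReal (Real.exp (μ j * x - μ j ^ 2 / 2)))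
    (fun j => by fun_prop)]
  rfl

theorem gaussPi_map_add (d : ℕ) (μ : Fin d → ℝ) :
    (gaussPi d 0).map (fun x => x + μ) = gaussPi d μ := by
  unfold gaussPi
  have := Measure.pi_map_pi (μ := fun _ : Fin d => gaussianReal 0 1) (f := fun j x => x + μ j)
    (fun j => by fun_prop)
  simp only [gaussianReal_map_add_const, zero_add] at this
  exact this

/-- replacing rows outside `A` -/
def mix {n : ℕ} {E : Type} (A : Finset (Fin n)) (Y G : Fin n → E) : Fin n → E :=
  fun i => if i ∈ A then Y i else G i

theorem measurable_mix {n : ℕ} {E : Type} [MeasurableSpace E] (A : Finset (Fin n)) :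
    Measurable (fun q : (Fin n → E) × (Fin n → E) => mix A q.1 q.2) := by
  unfold mix
  rw [measurable_pi_iff]
  intro i
  by_cases h : i ∈ A <;> simp only [h, if_true, if_false] <;> fun_prop

theorem kernel_eq {n d : ℕ} (A : Finset (Fin n)) (Y : Fin n → Fin d → ℝ) (μ : Fin d → ℝ) :
    (Measure.pi fun i : Fin n => if i ∈ A then Measure.dirac (Y i) else gaussPi d μ)
      = (Measure.pi fun _ : Fin n => gaussPi d 0).map (fun G => mix A Y (fun i => G i + μ)) := by
  have h := Measure.pi_map_pi (μ := fun _ : Fin n => gaussPi d 0)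
    (f := fun i x => if i ∈ A then Y i else x + μ) (hμ := by
      intro i; by_cases h : i ∈ A <;> simp only [h, if_true, if_false] <;>
      exact inferInstanceAs (SigmaFinite (Measure.map _ _)) )
    (fun i => by
      by_cases h : i ∈ A <;> simp only [h, if_true, if_false] <;> fun_prop)
  unfold mix
  rw [h]
  congr 1
  ext1 i
  by_cases h : i ∈ A
  · simp [h]
  · simp [h, gaussPi_map_add]

theorem mix_map {n : ℕ} {E : Type} [MeasurableSpace E] (A : Finset (Fin n)) (γ : Measure E)
    [IsProbabilityMeasure γ] :
    ((Measure.pi fun _ : Fin n => γ).prod (Measure.pi fun _ : Fin n => γ)).map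
      (fun q => mix A q.1 q.2) = Measure.pi fun _ : Fin n => γ := by
  symm
  refine Measure.pi_eq fun s hs => ?_
  rw [Measure.map_apply (measurable_mix A) (MeasurableSet.univ_pi hs)]
  have : (fun q : (Fin n → E) × (Fin n → E) => mix A q.1 q.2) ⁻¹' (Set.univ.pi s)
      = (Set.univ.pi fun i => if i ∈ A then s i else Set.univ) ×ˢ
        (Set.univ.pi fun i => if i ∈ A then Set.univ else s i) := by
    ext q
    simp only [Set.mem_preimage, Set.mem_univ_pi, Set.mem_prod, mix, ← forall_and]
    refine forall_congr' fun i => ?_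
    by_cases h : i ∈ A <;> simp [h]
  rw [this, Measure.prod_prod, Measure.pi_pi, Measure.pi_pi, ← Finset.prod_mul_distrib]
  refine Finset.prod_congr rfl fun i _ => ?_
  by_cases h : i ∈ A <;> simp [h]

theorem measurable_shift {n d : ℕ} (A : Finset (Fin n)) (μ : Fin d → ℝ) :
    Measurable (fun (G : Fin n → Fin d → ℝ) i => G i + (if i ∈ A then 0 else μ)) := by
  fun_prop

theorem shift_density {n d : ℕ} (A : Finset (Fin n)) (μ : Fin d → ℝ) :
    (Measure.pi fun _ : Fin n => gaussPi d 0).map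
        (fun G i => G i + (if i ∈ A then 0 else μ))
      = (Measure.pi fun _ : Fin n => gaussPi d 0).withDensity
        (fun G => ∏ j, ENNReal.ofReal (Real.exp (∑ i ∈ Aᶜ, (μ j * G i j - μ j ^ 2 / 2)))) := by
  set h : Fin n → Fin d → ℝ := fun i => if i ∈ A then 0 else μ with hh
  have e1 : ∀ i, (gaussPi d 0).map (fun x => x + h i) = gaussPi d (h i) :=
    fun i => gaussPi_map_add d (h i)
  have hs : ∀ i, SigmaFinite ((gaussPi d 0).map (fun x => x + h i)) := by
    intro i; rw [e1]; infer_instance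
  have h1 := Measure.pi_map_pi (μ := fun _ : Fin n => gaussPi d 0)
    (f := fun i x => x + h i) (hμ := hs) (fun i => by fun_prop)
  have hs2 : ∀ i, SigmaFinite ((gaussPi d 0).withDensity
      (fun x => ∏ j, ENNReal.ofReal (Real.exp (h i j * x j - h i j ^ 2 / 2)))) := by
    intro i; rw [← gaussPi_shift]; infer_instance
  rw [show (fun (G : Fin n → Fin d → ℝ) i => G i + (if i ∈ A then 0 else μ)) = fun G i => G i + h i from rfl, h1]
  simp_rw [e1, gaussPi_shift d (h _)]
  rw [pi_withDensity_fin (E := Fin d → ℝ) (μ := fun _ => gaussPi d 0)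
    (fun i (x : Fin d → ℝ) => ∏ j, ENNReal.ofReal (Real.exp (h i j * x j - h i j ^ 2 / 2)))
    (fun i => by fun_prop)]
  congr 1
  ext G
  rw [Finset.prod_comm]
  refine Finset.prod_congr rfl fun j _ => ?_
  rw [← ENNReal.ofReal_prod_of_nonneg (fun i _ => by positivity), ← Real.exp_sum]
  congr 2
  symm
  have : ∀ i ∈ Aᶜ, (μ j * G i j - μ j ^ 2 / 2) = (h i j * G i j - h i j ^ 2 / 2) := by
    intro i hi
    have : i ∉ A := by simpa using hi
    simp [hh, this]
  rw [Finset.sum_congr rfl this]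
  refine Finset.sum_subset (Finset.subset_univ _) fun i _ hi => ?_
  have : i ∈ A := by simpa using hi
  simp [hh, this]

theorem lintegral_kernel {n d : ℕ} (A : Finset (Fin n)) (Y : Fin n → Fin d → ℝ) (μ : Fin d → ℝ)
    (f : (Fin n → Fin d → ℝ) → ℝ≥0∞) (hf : Measurable f) :
    ∫⁻ X, f X ∂(Measure.pi fun i : Fin n => if i ∈ A then Measure.dirac (Y i) else gaussPi d μ)
      = ∫⁻ G, (∏ j, ENNReal.ofReal (Real.exp (∑ i ∈ Aᶜ, (μ j * G i j - μ j ^ 2 / 2))))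
          * f (mix A Y G) ∂(Measure.pi fun _ : Fin n => gaussPi d 0) := by
  have hm : Measurable (fun G : Fin n → Fin d → ℝ => f (mix A Y G)) :=
    hf.comp ((measurable_mix A).comp (measurable_const.prodMk measurable_id))
  have e : (fun G : Fin n → Fin d → ℝ => mix A Y (fun i => G i + μ))
      = (fun G => mix A Y G) ∘ (fun G i => G i + (if i ∈ A then 0 else μ)) := by
    ext G i
    by_cases h : i ∈ A <;> simp [mix, h]
  rw [kernel_eq, lintegral_map hf]
  · have : ∀ G : Fin n → Fin d → ℝ, f (mix A Y (fun i => G i + μ))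
        = (fun G => f (mix A Y G)) (fun i => G i + (if i ∈ A then 0 else μ)) := by
      intro G; exact congrArg f (congrFun e G)
    simp_rw [this]
    rw [← lintegral_map hm (measurable_shift A μ), shift_density,
      lintegral_withDensity_eq_lintegral_mul _ (by fun_prop) hm]
    rfl
  · exact (measurable_mix A).comp (measurable_const.prodMk (by fun_prop))

/-- the mixture kernel -/
noncomputable def kern {n d : ℕ} (A : Finset (Fin n)) (β : ℝ) (Yz : (Fin n → Fin d → ℝ) × (Fin d → ℝ)) :
    Measure (Fin n → Fin d → ℝ) :=
  Measure.pi fun i : Fin n =>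
                if i ∈ A then Measure.dirac (Yz.1 i)
                else gaussPi d (-(β • ∑ j ∈ A, Yz.1 j) - Yz.2)

instance kern_prob {n d : ℕ} (A : Finset (Fin n)) (β : ℝ) (Yz : (Fin n → Fin d → ℝ) × (Fin d → ℝ)) :
    IsProbabilityMeasure (kern A β Yz) := by
  unfold kern
  have : ∀ i, IsProbabilityMeasure (if i ∈ A then Measure.dirac (Yz.1 i)
                else gaussPi d (-(β • ∑ j ∈ A, Yz.1 j) - Yz.2)) := by
    intro i; split_ifs <;> infer_instance
  infer_instance

theorem measurable_kern {n d : ℕ} (A : Finset (Fin n)) (β : ℝ) :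
    Measurable (kern (d := d) A β) := by
  refine Measure.measurable_of_measurable_coe _ fun s hs => ?_
  have hm : Measurable (fun q : ((Fin n → Fin d → ℝ) × (Fin d → ℝ)) × (Fin n → Fin d → ℝ) =>
      mix A q.1.1 (fun i => q.2 i + (-(β • ∑ j ∈ A, q.1.1 j) - q.1.2))) := by
    refine (measurable_mix A).comp (Measurable.prodMk (by fun_prop) ?_)
    fun_prop
  have : ∀ Yz, kern A β Yz s = (Measure.pi fun _ : Fin n => gaussPi d 0)
      (Prod.mk Yz ⁻¹' ((fun q : ((Fin n → Fin d → ℝ) × (Fin d → ℝ)) × (Fin n → Fin d → ℝ) =>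
      mix A q.1.1 (fun i => q.2 i + (-(β • ∑ j ∈ A, q.1.1 j) - q.1.2))) ⁻¹' s)) := by
    intro Yz
    unfold kern
    have hm2 : Measurable (fun G : Fin n → Fin d → ℝ =>
        mix A Yz.1 (fun i => G i + (-(β • ∑ j ∈ A, Yz.1 j) - Yz.2))) :=
      hm.comp (measurable_const.prodMk measurable_id)
    rw [kernel_eq, Measure.map_apply hm2 hs]
    rfl
  simp_rw [this]
  exact measurable_measure_prodMk_left (hm hs)

theorem mix_fubini {n : ℕ} {E H : Type} [MeasurableSpace E] [MeasurableSpace H] (A : Finset (Fin n))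
    (γ : Measure E) [IsProbabilityMeasure γ] (Z : Measure H) [IsProbabilityMeasure Z]
    (F : (Fin n → E) × H → ℝ≥0∞) (hF : Measurable F) :
    ∫⁻ Yz, ∫⁻ G, F (mix A Yz.1 G, Yz.2) ∂(Measure.pi fun _ : Fin n => γ)
        ∂((Measure.pi fun _ : Fin n => γ).prod Z)
      = ∫⁻ X, ∫⁻ z, F (X, z) ∂Z ∂(Measure.pi fun _ : Fin n => γ) := by
  have hG : Measurable (fun q : ((Fin n → E) × H) × (Fin n → E) => F (mix A q.1.1 q.2, q.1.2)) := by
    refine hF.comp (Measurable.prodMk ?_ (by fun_prop))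
    exact (measurable_mix A).comp (f := fun q : ((Fin n → E) × H) × (Fin n → E) => (q.1.1, q.2))
      (by fun_prop)
  rw [lintegral_prod_symm' _ hG.lintegral_prod_right', lintegral_lintegral_swap (f := fun X z => F (X, z)) hF.aemeasurable]
  refine lintegral_congr fun z => ?_
  have hFz : Measurable (fun X : Fin n → E => F (X, z)) :=
    hF.comp (measurable_id.prodMk measurable_const)
  conv_rhs => rw [← mix_map A γ, lintegral_map hFz (measurable_mix A)]
  exact (lintegral_prod _ (hFz.comp (measurable_mix A)).aemeasurable).symm

theorem component_density {n d : ℕ} (A : Finset (Fin n)) (β : ℝ) (v : NNReal) :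
    ((Measure.pi fun _ : Fin n => gaussPi d 0).prod
      (Measure.pi fun _ : Fin d => gaussianReal 0 v)).bind (kern A β)
      = (Measure.pi fun _ : Fin n => gaussPi d 0).withDensity
        (fun X => ∏ j, ell A β v (fun i => X i j)) := by
  have hW : Measurable (fun q : (Fin n → Fin d → ℝ) × (Fin d → ℝ) =>
      ∏ j, ENNReal.ofReal (Real.exp (expo A β (fun i => q.1 i j) (q.2 j)))) := by
    refine Finset.measurable_prod _ fun j _ => ?_
    exact ((measurable_expo A β).comp (Measurable.prodMk (by fun_prop) (by fun_prop))).exp.ennreal_ofReal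
  ext s hs
  rw [Measure.bind_apply hs (measurable_kern A β).aemeasurable, withDensity_apply _ hs,
    ← lintegral_indicator hs]
  have hF : Measurable (fun q : (Fin n → Fin d → ℝ) × (Fin d → ℝ) =>
      (∏ j, ENNReal.ofReal (Real.exp (expo A β (fun i => q.1 i j) (q.2 j)))) * s.indicator 1 q.1) :=
    hW.mul ((measurable_one.indicator hs).comp measurable_fst)
  have e1 : ∀ Yz : (Fin n → Fin d → ℝ) × (Fin d → ℝ), kern A β Yz s
      = ∫⁻ G, (∏ j, ENNReal.ofReal (Real.exp (expo A β (fun i => mix A Yz.1 G i j) (Yz.2 j))))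
        * s.indicator 1 (mix A Yz.1 G) ∂(Measure.pi fun _ : Fin n => gaussPi d 0) := by
    intro Yz
    rw [← lintegral_indicator_one hs]
    unfold kern
    rw [lintegral_kernel _ _ _ _ (measurable_one.indicator hs)]
    refine lintegral_congr fun G => ?_
    congr 1
    refine Finset.prod_congr rfl fun j _ => ?_
    congr 2
    unfold expo
    have h1 : ∑ i ∈ A, mix A Yz.1 G i j = ∑ i ∈ A, Yz.1 i j :=
      Finset.sum_congr rfl fun i hi => by simp [mix, hi]
    rw [h1]
    refine Finset.sum_congr rfl fun i hi => ?_
    have : i ∉ A := by simpa using hi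
    simp [mix, this, Finset.sum_apply]
  simp_rw [e1]
  refine (mix_fubini A (gaussPi d 0) (Measure.pi fun _ : Fin d => gaussianReal 0 v) _ hF).trans ?_
  refine lintegral_congr fun X => ?_
  simp only
  rw [lintegral_mul_const]
  swap
  · refine Finset.measurable_prod _ fun j _ => ?_
    unfold expo
    fun_prop
  rw [lintegral_fin_prod_aux (fun j z => ENNReal.ofReal (Real.exp (expo A β (fun i => X i j) z)))
    (fun j => by unfold expo; fun_prop)]
  by_cases h : X ∈ s <;> simp [h, ell]

theorem component_one {n d : ℕ} (A : Finset (Fin n)) (β : ℝ) (v : NNReal) :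
    ∫⁻ X, ∏ j : Fin d, ell A β v (fun i => X i j) ∂(Measure.pi fun _ : Fin n => gaussPi d 0) = 1 := by
  have h := congrArg (fun m => m Set.univ) (component_density (d := d) A β v)
  simp only [withDensity_apply _ MeasurableSet.univ, Measure.restrict_univ] at h
  rw [← h, Measure.bind_apply MeasurableSet.univ (measurable_kern A β).aemeasurable]
  simp

theorem measurable_LA {n d : ℕ} (A : Finset (Fin n)) (β : ℝ) (v : NNReal) :
    Measurable (fun X : Fin n → Fin d → ℝ => ∏ j : Fin d, ell A β v (fun i => X i j)) := by
  refine Finset.measurable_prod _ fun j _ => (measurable_ell A β v).comp ?_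
  fun_prop

theorem pair_moment {n d : ℕ} (A A' : Finset (Fin n)) (β : ℝ) (v : NNReal) :
    ∫⁻ X, (∏ j : Fin d, ell A β v (fun i => X i j)) * (∏ j : Fin d, ell A' β v (fun i => X i j))
        ∂(Measure.pi fun _ : Fin n => gaussPi d 0)
      = (∫⁻ x, ell A β v x * ell A' β v x ∂(Measure.pi fun _ : Fin n => gaussianReal 0 1)) ^ d := by
  rw [← lintegral_swap_prod n d _ (fun x => ell A β v x * ell A' β v x)
    ((measurable_ell A β v).mul (measurable_ell A' β v))]
  simp_rw [← Finset.prod_mul_distrib]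
  rfl

theorem tv_mixture {n d : ℕ} (S : Finset (Finset (Fin n))) (hS : S.Nonempty) (β : ℝ) (v : NNReal)
    (H : ∀ A' ∈ S, ∑ A ∈ S, (∫⁻ x, ell A β v x * ell A' β v x
      ∂(Measure.pi fun _ : Fin n => gaussianReal 0 1)) ^ d ≤ S.card * ENNReal.ofReal 1.01) :
    ∀ s, MeasurableSet s → |((Measure.pi fun _ : Fin n => gaussPi d 0) s).toReal
      - (((S.card : ℝ≥0∞)⁻¹ • ∑ A ∈ S, ((Measure.pi fun _ : Fin n => gaussPi d 0).prod
          (Measure.pi fun _ : Fin d => gaussianReal 0 v)).bind (kern A β)) s).toReal| ≤ 0.1 := by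
  set D0 := Measure.pi fun _ : Fin n => gaussPi d 0 with hD0
  set LA : Finset (Fin n) → (Fin n → Fin d → ℝ) → ℝ≥0∞ :=
    fun A X => ∏ j : Fin d, ell A β v (fun i => X i j) with hLA
  have hmA : ∀ A, Measurable (LA A) := fun A => measurable_LA A β v
  set L : (Fin n → Fin d → ℝ) → ℝ≥0∞ := fun X => (S.card : ℝ≥0∞)⁻¹ * ∑ A ∈ S, LA A X with hL
  have hms : Measurable (fun X => ∑ A ∈ S, LA A X) := Finset.measurable_sum _ fun A _ => hmA A
  have hmL : Measurable L := hms.const_mul _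
  have hc0 : (S.card : ℝ≥0∞) ≠ 0 := by simpa using hS.ne_empty
  have hct : (S.card : ℝ≥0∞) ≠ ⊤ := by simp
  have hD : (S.card : ℝ≥0∞)⁻¹ • ∑ A ∈ S, (D0.prod
          (Measure.pi fun _ : Fin d => gaussianReal 0 v)).bind (kern A β) = D0.withDensity L := by
    ext s hs
    rw [withDensity_apply _ hs, hL, lintegral_const_mul _ hms, lintegral_finsetSum _ (fun A _ => hmA A)]
    simp only [Measure.smul_apply, Measure.finsetSum_apply, smul_eq_mul]
    congr 1
    refine Finset.sum_congr rfl fun A _ => ?_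
    rw [hD0, component_density, withDensity_apply _ hs]
  rw [hD]
  refine tv_le_of_sq D0 L hmL ?_ ?_
  · rw [hL, lintegral_const_mul _ hms, lintegral_finsetSum _ (fun A _ => hmA A),
      Finset.sum_congr rfl (fun A _ => component_one A β v)]
    simp [ENNReal.inv_mul_cancel hc0 hct]
  · have e : ∀ X, L X * L X = (S.card : ℝ≥0∞)⁻¹ * ((S.card : ℝ≥0∞)⁻¹ *
        ∑ A' ∈ S, ∑ A ∈ S, LA A X * LA A' X) := by
      intro X
      simp only [hL]
      rw [Finset.sum_comm, ← Finset.sum_mul_sum]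
      ring
    simp_rw [e]
    have m1 : ∀ A', Measurable (fun X => ∑ A ∈ S, LA A X * LA A' X) := fun A' =>
      Finset.measurable_sum _ fun A _ => (hmA A).mul (hmA A')
    have m2 : Measurable (fun X => ∑ A' ∈ S, ∑ A ∈ S, LA A X * LA A' X) :=
      Finset.measurable_sum _ fun A' _ => m1 A'
    rw [lintegral_const_mul _ (m2.const_mul _), lintegral_const_mul _ m2,
      lintegral_finsetSum _ (fun A' _ => m1 A')]
    have : ∑ A' ∈ S, ∫⁻ X, ∑ A ∈ S, LA A X * LA A' X ∂D0 ≤ ∑ A' ∈ S, S.card * ENNReal.ofReal 1.01 := by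
      refine Finset.sum_le_sum fun A' hA' => ?_
      rw [lintegral_finsetSum _ (f := fun A X => LA A X * LA A' X) (fun A _ => (hmA A).mul (hmA A')),
        Finset.sum_congr rfl (fun A _ => pair_moment A A' β v)]
      exact H A' hA'
    calc _ ≤ (S.card : ℝ≥0∞)⁻¹ * ((S.card : ℝ≥0∞)⁻¹ * ∑ A' ∈ S, S.card * ENNReal.ofReal 1.01) := by
          gcongr
      _ = ENNReal.ofReal 1.01 := by
          rw [Finset.sum_const, nsmul_eq_mul, ← mul_assoc (S.card : ℝ≥0∞)⁻¹ (S.card : ℝ≥0∞),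
            ENNReal.inv_mul_cancel hc0 hct, one_mul, ← mul_assoc, ENNReal.inv_mul_cancel hc0 hct, one_mul]

theorem choose_bound (j : ℕ) : ∀ n k : ℕ, j ≤ k → k ≤ n →
    ((n - j).choose (k - j) : ℝ) ≤ ((k : ℝ) / n) ^ j * (n.choose k) := by
  induction j with
  | zero => intro n k _ _; simp
  | succ j ih =>
    intro n k hj hk
    obtain ⟨k, rfl⟩ : ∃ k', k = k' + 1 := ⟨k - 1, by omega⟩
    obtain ⟨n, rfl⟩ : ∃ n', n = n' + 1 := ⟨n - 1, by omega⟩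
    have h := ih n k (by omega) (by omega)
    rw [Nat.add_sub_add_right, Nat.add_sub_add_right]
    have h1 : ((n : ℝ) + 1) * n.choose k = (n + 1).choose (k + 1) * ((k : ℝ) + 1) := by
      exact_mod_cast Nat.add_one_mul_choose_eq n k
    have hkn : (k : ℝ) ≤ n := by exact_mod_cast (by omega : k ≤ n)
    have h2 : (k : ℝ) / n ≤ ((k : ℝ) + 1) / (n + 1) := by
      rcases Nat.eq_zero_or_pos n with h0 | h0
      · subst h0; simp; positivity
      · have : (0 : ℝ) < n := by exact_mod_cast h0
        rw [div_le_div_iff₀ this (by positivity)]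
        nlinarith
    have h3 : (n.choose k : ℝ) = ((k : ℝ) + 1) / (n + 1) * (n + 1).choose (k + 1) := by
      field_simp
      linarith
    push_cast
    calc ((n - j).choose (k - j) : ℝ) ≤ ((k : ℝ) / n) ^ j * (n.choose k) := h
      _ ≤ (((k : ℝ) + 1) / (n + 1)) ^ j * (n.choose k) := by gcongr
      _ = _ := by rw [h3]; ring

theorem count_supersets {n k : ℕ} (J : Finset (Fin n)) (hkn : k ≤ n) :
    (((Finset.powersetCard k (Finset.univ : Finset (Fin n))).filter (fun A => J ⊆ A)).card : ℝ)
      ≤ ((k : ℝ) / n) ^ J.card * (n.choose k) := by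
  by_cases h : J.card ≤ k
  · rw [Finset.card_filter_powersetCard_subset J Finset.univ k (Finset.subset_univ _) h]
    simpa using choose_bound J.card n k h hkn
  · have : (Finset.powersetCard k (Finset.univ : Finset (Fin n))).filter (fun A => J ⊆ A) = ∅ := by
      rw [Finset.filter_eq_empty_iff]
      intro A hA hJ
      have := Finset.card_le_card hJ
      rw [(Finset.mem_powersetCard.mp hA).2] at this
      omega
    rw [this]
    simp
    positivity

theorem mgf_aux {n k : ℕ} (B : Finset (Fin n)) (hkn : k ≤ n) (u : ℝ) (hu : 0 ≤ u) :
    ∑ A ∈ Finset.powersetCard k (Finset.univ : Finset (Fin n)), (1 + u) ^ (A ∩ B).card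
      ≤ (n.choose k : ℝ) * (1 + (k : ℝ) / n * u) ^ B.card := by
  have e1 : ∀ A : Finset (Fin n), (1 + u) ^ (A ∩ B).card
      = ∑ J ∈ B.powerset, if J ⊆ A then u ^ J.card else 0 := by
    intro A
    have := Finset.sum_pow_mul_eq_add_pow u 1 (A ∩ B)
    simp only [one_pow, mul_one] at this
    rw [add_comm, ← this, ← Finset.sum_filter]
    refine Finset.sum_congr ?_ fun _ _ => rfl
    ext J
    simp only [Finset.mem_powerset, Finset.mem_filter, Finset.subset_inter_iff]
    tauto
  have e2 := Finset.sum_pow_mul_eq_add_pow ((k : ℝ) / n * u) 1 B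
  simp only [one_pow, mul_one] at e2
  simp_rw [e1]
  rw [Finset.sum_comm, add_comm, ← e2, Finset.mul_sum]
  refine Finset.sum_le_sum fun J _ => ?_
  rw [← Finset.sum_filter, Finset.sum_const, nsmul_eq_mul]
  calc _ ≤ (((k : ℝ) / n) ^ J.card * (n.choose k)) * u ^ J.card := by
        gcongr; exact count_supersets J hkn
    _ = _ := by rw [mul_pow]; ring

theorem mgf_bound {n k : ℕ} (hn : 0 < n) (B : Finset (Fin n)) (hB : B.card = k) (hkn : k ≤ n) (ε τ : ℝ)
    (hk : (k : ℝ) = ε * n) (hε : 0 ≤ ε) (h0 : 0 ≤ τ) (h1 : τ ≤ 1) :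
    ∑ A ∈ Finset.powersetCard k (Finset.univ : Finset (Fin n)),
      Real.exp (τ * ((A ∩ B).card - ε ^ 2 * n))
      ≤ (n.choose k : ℝ) * Real.exp (ε ^ 2 * n * τ ^ 2) := by
  have hn' : (n : ℝ) ≠ 0 := by positivity
  have hu : 0 ≤ Real.exp τ - 1 := by linarith [Real.one_le_exp h0]
  have hu2 : Real.exp τ - 1 ≤ τ + τ ^ 2 := by
    have := (abs_le.mp (Real.abs_exp_sub_one_sub_id_le (x := τ) (by rw [abs_of_nonneg h0]; exact h1))).2
    linarith
  have key := mgf_aux B hkn _ hu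
  have hkn2 : (k : ℝ) / n = ε := by rw [hk]; field_simp
  rw [hkn2, hB] at key
  have e : ∀ A : Finset (Fin n), Real.exp (τ * ((A ∩ B).card - ε ^ 2 * n))
      = (1 + (Real.exp τ - 1)) ^ (A ∩ B).card * Real.exp (-(τ * (ε ^ 2 * n))) := by
    intro A
    rw [show 1 + (Real.exp τ - 1) = Real.exp τ by ring, ← Real.exp_nat_mul, ← Real.exp_add]
    congr 1; ring
  simp_rw [e]
  rw [← Finset.sum_mul]
  have h3 : (1 + ε * (Real.exp τ - 1)) ^ k ≤ Real.exp (ε ^ 2 * n * (τ + τ ^ 2)) := by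
    calc (1 + ε * (Real.exp τ - 1)) ^ k ≤ (Real.exp (ε * (Real.exp τ - 1))) ^ k := by
          gcongr
          linarith [Real.add_one_le_exp (ε * (Real.exp τ - 1))]
      _ = Real.exp (ε ^ 2 * n * (Real.exp τ - 1)) := by
          rw [← Real.exp_nat_mul, hk]; congr 1; ring
      _ ≤ _ := by gcongr
  calc _ ≤ ((n.choose k : ℝ) * (1 + ε * (Real.exp τ - 1)) ^ k) * Real.exp (-(τ * (ε ^ 2 * n))) := by
        gcongr
    _ ≤ ((n.choose k : ℝ) * Real.exp (ε ^ 2 * n * (τ + τ ^ 2))) * Real.exp (-(τ * (ε ^ 2 * n))) := by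
        gcongr
    _ = _ := by
        rw [mul_assoc, ← Real.exp_add]; congr 2; ring

theorem det_lower (β ε n x : ℝ) (hn : 0 ≤ n) (hε0 : 0 ≤ ε) (hε : ε ≤ 1 / 100)
    (hx1 : x ≤ ε * n) (hx2 : -(ε * n) ≤ x) :
    1 - (4 * β ^ 2 * n * max x 0 + 8 * β ^ 2 * ε ^ 4 * n ^ 2) ≤
      (1 - β ^ 2 * n * x) ^ 2 - β ^ 2 * (2 * ε ^ 2 * (1 - ε) * n - 2 * (1 + ε) * x) ^ 2 := by
  have ha : |x| ≤ ε * n := abs_le.mpr ⟨hx2, hx1⟩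
  have hxx : x ^ 2 ≤ ε * n * |x| := by
    rw [← sq_abs]; nlinarith [abs_nonneg x]
  have h1 : (2 * ε ^ 2 * (1 - ε) * n - 2 * (1 + ε) * x) ^ 2
      ≤ 8 * ε ^ 4 * n ^ 2 + 2 * n * |x| := by
    have e1 : (2 * ε ^ 2 * (1 - ε) * n - 2 * (1 + ε) * x) ^ 2
        ≤ 2 * (2 * ε ^ 2 * (1 - ε) * n) ^ 2 + 2 * (2 * (1 + ε) * x) ^ 2 := by
      nlinarith [sq_nonneg (2 * ε ^ 2 * (1 - ε) * n + 2 * (1 + ε) * x)]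
    have e2 : 2 * (2 * ε ^ 2 * (1 - ε) * n) ^ 2 ≤ 8 * ε ^ 4 * n ^ 2 := by
      have : (1 - ε) ^ 2 ≤ 1 := by nlinarith
      calc _ = 8 * ε ^ 4 * n ^ 2 * (1 - ε) ^ 2 := by ring
        _ ≤ 8 * ε ^ 4 * n ^ 2 * 1 := by gcongr
        _ = _ := by ring
    have e3 : 2 * (2 * (1 + ε) * x) ^ 2 ≤ 2 * n * |x| := by
      have h : (1 + ε) ^ 2 * ε ≤ 1 / 4 := by nlinarith
      calc 2 * (2 * (1 + ε) * x) ^ 2 = 8 * (1 + ε) ^ 2 * x ^ 2 := by ring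
        _ ≤ 8 * (1 + ε) ^ 2 * (ε * n * |x|) := by gcongr
        _ = 8 * ((1 + ε) ^ 2 * ε) * (n * |x|) := by ring
        _ ≤ 8 * (1 / 4) * (n * |x|) := by gcongr
        _ = _ := by ring
    linarith
  have h2 : β ^ 2 * (2 * ε ^ 2 * (1 - ε) * n - 2 * (1 + ε) * x) ^ 2
      ≤ β ^ 2 * (8 * ε ^ 4 * n ^ 2 + 2 * n * |x|) := by gcongr
  have h3 : x + |x| = 2 * max x 0 := by
    rcases le_total x 0 with h | h
    · rw [abs_of_nonpos h, max_eq_right h]; ring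
    · rw [abs_of_nonneg h, max_eq_left h]; ring
  have h4 : 4 * β ^ 2 * n * max x 0 = 2 * β ^ 2 * n * (x + |x|) := by rw [h3]; ring
  nlinarith [sq_nonneg (β ^ 2 * n * x)]

theorem inv_sqrt_pow (d : ℕ) (y Δ : ℝ) (hy0 : 0 ≤ y) (hy : y ≤ 1 / 2) (h : 1 - y ≤ Δ) :
    (1 / Real.sqrt Δ) ^ d ≤ Real.exp (d * y) := by
  have h1 : Real.exp (-y) ^ 2 ≤ Δ := by
    rw [← Real.exp_nat_mul]
    refine le_trans ?_ h
    have : Real.exp ((2 : ℕ) * -y) = (Real.exp (2 * y))⁻¹ := by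
      rw [← Real.exp_neg]; congr 1; push_cast; ring
    rw [this]
    have h2 := Real.add_one_le_exp (2 * y)
    rw [inv_le_iff_one_le_mul₀ (Real.exp_pos _)]
    nlinarith
  have h2 : Real.exp (-y) ≤ Real.sqrt Δ := Real.le_sqrt_of_sq_le h1
  have h3 : 1 / Real.sqrt Δ ≤ Real.exp y := by
    rw [Real.exp_neg] at h2
    rw [one_div]
    exact inv_le_of_inv_le₀ (Real.exp_pos _) h2
  calc (1 / Real.sqrt Δ) ^ d ≤ Real.exp y ^ d := by gcongr
    _ = _ := by rw [← Real.exp_nat_mul]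

theorem exp_pos_part (T x : ℝ) :
    Real.exp (T * max x 0) ≤ 1 + 1 / 1000 * Real.exp ((1000 * T) * x) := by
  rcases le_total x 0 with h | h
  · rw [max_eq_right h]
    simp
    positivity
  · rw [max_eq_left h]
    have := one_add_mul_le_pow (a := Real.exp (T * x) - 1) (by linarith [Real.exp_pos (T * x)]) 1000
    rw [add_sub_cancel, ← Real.exp_nat_mul] at this
    have e : ((1000 : ℕ) : ℝ) * (T * x) = 1000 * T * x := by push_cast; ring
    rw [e] at this
    push_cast at this
    linarith

theorem sum_bound {n k d : ℕ} (hn : 0 < n) (B : Finset (Fin n)) (hB : B.card = k) (hkn : k ≤ n)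
    (ε β : ℝ) (hk : (k : ℝ) = ε * n) (hε0 : 0 ≤ ε) (hε : ε ≤ 1 / 100) (hβ0 : 0 ≤ β)
    (hβn : β * n ≤ 1 / 1000)
    (hT : 4000 * (d * β ^ 2 * n) ≤ 1)
    (hTT : ε ^ 2 * n * (4000 * (d * β ^ 2 * n)) ^ 2 ≤ 1)
    (hs : 8 * (d * β ^ 2 * ε ^ 4 * n ^ 2) ≤ 1 / 1000) :
    ∑ A ∈ Finset.powersetCard k (Finset.univ : Finset (Fin n)),
      (1 / Real.sqrt ((1 - β ^ 2 * n * ((A ∩ B).card - ε ^ 2 * n)) ^ 2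
          - β ^ 2 * (2 * ε ^ 2 * (1 - ε) * n - 2 * (1 + ε) * ((A ∩ B).card - ε ^ 2 * n)) ^ 2)) ^ d
      ≤ (n.choose k : ℝ) * 1.01 := by
  set s := 8 * (d * β ^ 2 * ε ^ 4 * n ^ 2) with hsdef
  set T := 4 * (d * β ^ 2 * n) with hTdef
  have hn0 : (0 : ℝ) < n := by exact_mod_cast hn
  have hbn0 : 0 ≤ β * n := by positivity
  have hpt : ∀ A ∈ Finset.powersetCard k (Finset.univ : Finset (Fin n)),
      (1 / Real.sqrt ((1 - β ^ 2 * n * ((A ∩ B).card - ε ^ 2 * n)) ^ 2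
          - β ^ 2 * (2 * ε ^ 2 * (1 - ε) * n - 2 * (1 + ε) * ((A ∩ B).card - ε ^ 2 * n)) ^ 2)) ^ d
      ≤ Real.exp s * (1 + 1 / 1000 * Real.exp ((1000 * T) * ((A ∩ B).card - ε ^ 2 * n))) := by
    intro A hA
    have hc : ((A ∩ B).card : ℝ) ≤ ε * n := by
      rw [← hk, ← hB]
      exact_mod_cast Finset.card_le_card Finset.inter_subset_right
    set x : ℝ := (A ∩ B).card - ε ^ 2 * n with hx
    have hc0 : (0 : ℝ) ≤ (A ∩ B).card := by positivity
    have hεε : ε ^ 2 * n ≤ ε * n := by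
      have : ε ^ 2 ≤ ε := by nlinarith
      gcongr
    have hx1 : x ≤ ε * n := by have : 0 ≤ ε ^ 2 * n := by positivity
                               linarith
    have hx2 : -(ε * n) ≤ x := by linarith
    have hd := det_lower β ε n x hn0.le hε0 hε hx1 hx2
    have hm : max x 0 ≤ ε * n := max_le hx1 (by positivity)
    have hm0 : 0 ≤ max x 0 := le_max_right _ _
    have hy : 4 * β ^ 2 * n * max x 0 + 8 * β ^ 2 * ε ^ 4 * n ^ 2 ≤ 1 / 2 := by
      have hq : (β * n) ^ 2 ≤ 1 := by nlinarith
      have hε4 : ε ^ 4 ≤ 1 / 100 := by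
        calc ε ^ 4 ≤ (1 / 100) ^ 4 := by gcongr
          _ ≤ _ := by norm_num
      calc _ ≤ 4 * β ^ 2 * n * (ε * n) + 8 * β ^ 2 * ε ^ 4 * n ^ 2 := by gcongr
        _ = (β * n) ^ 2 * (4 * ε + 8 * ε ^ 4) := by ring
        _ ≤ 1 * (4 * (1 / 100) + 8 * (1 / 100)) := by gcongr
        _ ≤ 1 / 2 := by norm_num
    have h1 := inv_sqrt_pow d _ _ (by positivity) hy hd
    refine h1.trans ?_
    have e : (d : ℝ) * (4 * β ^ 2 * n * max x 0 + 8 * β ^ 2 * ε ^ 4 * n ^ 2) = s + T * max x 0 := by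
      rw [hsdef, hTdef]; ring
    rw [e, Real.exp_add]
    gcongr
    exact exp_pos_part T x
  have hmgf := mgf_bound hn B hB hkn ε (1000 * T) hk hε0 (by positivity) (by rw [hTdef]; linarith)
  have hexp : Real.exp (ε ^ 2 * n * (1000 * T) ^ 2) ≤ 3 := by
    have : ε ^ 2 * n * (1000 * T) ^ 2 ≤ 1 := by
      rw [hTdef]; refine le_trans (le_of_eq ?_) hTT; ring
    linarith [Real.exp_le_exp.mpr this, Real.exp_one_lt_d9]
  have hes : Real.exp s ≤ 1.003 := by
    have h0 : 0 ≤ s := by positivity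
    have := (abs_le.mp (Real.abs_exp_sub_one_sub_id_le (x := s) (by rw [abs_of_nonneg h0]; linarith))).2
    nlinarith
  have hcard : ((Finset.powersetCard k (Finset.univ : Finset (Fin n))).card : ℝ) = n.choose k := by
    simp
  refine (Finset.sum_le_sum hpt).trans ?_
  rw [← Finset.mul_sum, Finset.sum_add_distrib, ← Finset.mul_sum, Finset.sum_const, nsmul_eq_mul, hcard,
    mul_one]
  calc _ ≤ 1.003 * ((n.choose k : ℝ) + 1 / 1000 * ((n.choose k : ℝ) * 3)) := by
        gcongr
        exact hmgf.trans (by gcongr)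
    _ = (n.choose k : ℝ) * (1.003 * 1.003) := by ring
    _ ≤ _ := by gcongr; norm_num

theorem cube_hyp (n d ε α : ℝ) (hn : 0 < n) (hd : 0 < d) (hε : 0 < ε) (hα : 0 < α)
    (h : n ≤ 1 / 1000 * (d ^ ((2 : ℝ) / 3) * ε ^ ((2 : ℝ) / 3) / α ^ ((8 : ℝ) / 3))) :
    n ^ 3 * α ^ 8 ≤ 1 / 1000000000 * (d ^ 2 * ε ^ 2) := by
  have h3 : n ^ 3 ≤ (1 / 1000 * (d ^ ((2 : ℝ) / 3) * ε ^ ((2 : ℝ) / 3) / α ^ ((8 : ℝ) / 3))) ^ 3 := by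
    gcongr
  have r : ∀ x : ℝ, 0 < x → (x ^ ((2 : ℝ) / 3)) ^ 3 = x ^ 2 := by
    intro x hx
    rw [← Real.rpow_natCast, ← Real.rpow_mul hx.le, ← Real.rpow_natCast]
    norm_num
  have r8 : (α ^ ((8 : ℝ) / 3)) ^ 3 = α ^ 8 := by
    rw [← Real.rpow_natCast, ← Real.rpow_mul hα.le, ← Real.rpow_natCast]
    norm_num
  rw [mul_pow (1 / 1000 : ℝ), div_pow (_ * _), mul_pow (d ^ ((2 : ℝ) / 3)), r d hd, r ε hε, r8] at h3
  rw [show (1 / 1000 : ℝ) ^ 3 * (d ^ 2 * ε ^ 2 / α ^ 8) = (1 / 1000000000 * (d ^ 2 * ε ^ 2)) / α ^ 8 by ring,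
    le_div_iff₀ (by positivity)] at h3
  exact h3

set_option maxHeartbeats 1000000 in
theorem params (n d ε α β : ℝ) (hn : 0 < n) (hd : 0 < d) (hε : 0 < ε) (hεα : ε ≤ α) (hα1 : α ≤ 1)
    (hlt : α ^ 2 * n < d * ε)
    (hβ : β = (1 / n) * (1 - Real.sqrt (1 - α ^ 2 * n / (d * ε))))
    (h1 : n ≤ 1 / 1000 * (d ^ ((2 : ℝ) / 3) * ε ^ ((2 : ℝ) / 3) / α ^ ((8 : ℝ) / 3)))
    (h2 : n ≤ 1 / 1000 * (d * ε / α ^ 2))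
    (h3 : n ≥ Real.sqrt d / α ^ 2 + d * ε ^ 3 / α ^ 4) :
    0 ≤ β ∧ β * n ≤ 1 / 1000 ∧ α ^ 2 / d + β ^ 2 * (ε * n) = 2 * β * ε ∧ ε ≤ 1 / 100 ∧
    4000 * (d * β ^ 2 * n) ≤ 1 ∧ ε ^ 2 * n * (4000 * (d * β ^ 2 * n)) ^ 2 ≤ 1 ∧
    8 * (d * β ^ 2 * ε ^ 4 * n ^ 2) ≤ 1 / 1000 := by
  have hα : 0 < α := hε.trans_le hεα
  have hc := cube_hyp n d ε α hn hd hε hα h1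
  set u := α ^ 2 * n / (d * ε) with hu
  have hu0 : 0 ≤ u := by positivity
  have hu1 : u ≤ 1 / 1000 := by
    rw [hu, div_le_iff₀ (by positivity)]
    rw [← mul_div_assoc, le_div_iff₀ (by positivity)] at h2
    linarith
  set w := Real.sqrt (1 - u) with hw
  have hw0 : 0 ≤ w := Real.sqrt_nonneg _
  have hw2 : w ^ 2 = 1 - u := Real.sq_sqrt (by linarith)
  have hw1 : w ≤ 1 := by nlinarith
  have hβn : β * n = 1 - w := by rw [hβ]; field_simp
  have hβ0 : 0 ≤ β := by rw [hβ]; exact mul_nonneg (by positivity) (by linarith)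
  have hβu : β * n ≤ u := by rw [hβn]; nlinarith
  have hquad : 2 * (β * n) - (β * n) ^ 2 = u := by rw [hβn]; nlinarith
  -- t
  set b := α ^ 2 / (d * ε) with hb
  have hb0 : 0 < b := by positivity
  have hub : u = b * n := by rw [hu, hb]; ring
  have hβb : β ≤ b := by rw [hub] at hβu; exact le_of_mul_le_mul_right hβu hn
  set t := d * b ^ 2 * n with ht
  have ht0 : 0 < t := by positivity
  have hdb : d * b * ε = α ^ 2 := by rw [hb]; field_simp
  have e1 : t * (d * ε ^ 2) = n * α ^ 4 := by
    rw [ht, show α ^ 4 = (α ^ 2) ^ 2 by ring, ← hdb]; ring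
  have ht2 : t ^ 2 * (ε ^ 2 * n) ≤ 1 / 1000000000 := by
    have : t ^ 2 * (ε ^ 2 * n) * (d ^ 2 * ε ^ 2) = n ^ 3 * α ^ 8 := by
      calc _ = (t * (d * ε ^ 2)) ^ 2 * n := by ring
        _ = _ := by rw [e1]; ring
    rw [← this] at hc
    exact le_of_mul_le_mul_right hc (by positivity)
  have hp : 0 ≤ Real.sqrt d / α ^ 2 := by positivity
  have hp' : 0 ≤ d * ε ^ 3 / α ^ 4 := by positivity
  have h5 : Real.sqrt d ≤ n * α ^ 2 := by
    rw [← div_le_iff₀ (by positivity)]; linarith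
  have h6 : d * ε ^ 3 ≤ n * α ^ 4 := by
    rw [← div_le_iff₀ (by positivity)]; linarith
  have h7 : 1 ≤ t * (ε ^ 2 * n) := by
    have : d ≤ (n * α ^ 2) ^ 2 := by
      calc d = Real.sqrt d ^ 2 := (Real.sq_sqrt hd.le).symm
        _ ≤ _ := by gcongr
    have e : t * (ε ^ 2 * n) * d = (n * α ^ 2) ^ 2 := by
      calc _ = (t * (d * ε ^ 2)) * n := by ring
        _ = _ := by rw [e1]; ring
    rw [← e] at this
    exact le_of_mul_le_mul_right (by linarith) hd
  have h8 : ε ≤ t := by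
    rw [← e1] at h6
    refine le_of_mul_le_mul_right (a := d * ε ^ 2) ?_ (by positivity)
    linarith
  have h9 : t ≤ 1 / 1000000000 := by nlinarith
  have hdβ : d * β ^ 2 * n ≤ t := by rw [ht]; gcongr
  have hdβ0 : 0 ≤ d * β ^ 2 * n := by positivity
  clear_value t b u w
  refine ⟨hβ0, by linarith, ?_, by linarith, by linarith, ?_, ?_⟩
  · have : α ^ 2 / d = b * ε := by rw [hb]; field_simp
    rw [this]
    have h : (2 * β - β ^ 2 * n) * n = b * n := by rw [← hub, ← hquad]; ring
    have h' := mul_right_cancel₀ hn.ne' h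
    rw [← h']; ring
  · calc ε ^ 2 * n * (4000 * (d * β ^ 2 * n)) ^ 2 ≤ ε ^ 2 * n * (4000 * t) ^ 2 := by gcongr
      _ = 16000000 * (t ^ 2 * (ε ^ 2 * n)) := by ring
      _ ≤ 1 := by linarith
  · have hεt : ε ^ 2 ≤ t := by nlinarith
    calc 8 * (d * β ^ 2 * ε ^ 4 * n ^ 2) = 8 * ((d * β ^ 2 * n) * (ε ^ 2 * ε ^ 2 * n)) := by ring
      _ ≤ 8 * (t * (t * ε ^ 2 * n)) := by gcongr
      _ = 8 * (t ^ 2 * (ε ^ 2 * n)) := by ring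
      _ ≤ _ := by linarith

/-- (Oblivious lower bound.) Let `D₀ = N(0, I_d)^⊗n` and let `D₁` be obtained
by choosing a uniformly random subset `A ⊆ [n]` of size `εn = k`, drawing `{Xᵢ}_{i∈A}` i.i.d.
from `N(0, I_d)`, setting `R_A = Σ_{i∈A} Xᵢ`, drawing `z ~ N(0, (α²/d)·I_d)` independently,
setting `μ = −β·R_A − z` with `β = (1/n)(1 − √(1 − α²n/(dε)))`, and drawing `{Xᵢ}_{i∉A}`
i.i.d. from `N(μ, I_d)`. There is a sufficiently small absolute constant `c > 0` such that if
`n ≤ c·min(d^{2/3}ε^{2/3}/α^{8/3}, dε/α²)` and `n ≥ √d/α² + dε³/α⁴`, then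
`d_TV(D₀, D₁) ≤ 0.1`. -/
theorem oblivious_lower_bound : ∃ c : ℝ, 0 < c ∧
    ∀ (n d : ℕ) (ε α β : ℝ) (k : ℕ),
      0 < n → 0 < d → 0 < ε → ε ≤ α → α ≤ 1 →
      (k : ℝ) = ε * n →
      α ^ 2 * n < d * ε →
      β = (1 / (n : ℝ)) * (1 - Real.sqrt (1 - α ^ 2 * n / (d * ε))) →
      (n : ℝ) ≤ c * min ((d : ℝ) ^ ((2 : ℝ) / 3) * ε ^ ((2 : ℝ) / 3) / α ^ ((8 : ℝ) / 3))
          ((d : ℝ) * ε / α ^ 2) →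
      (n : ℝ) ≥ Real.sqrt d / α ^ 2 + d * ε ^ 3 / α ^ 4 →
      tvDist
        (Measure.pi fun _ : Fin n => gaussPi d 0)
        (((Finset.powersetCard k (Finset.univ : Finset (Fin n))).card : ℝ≥0∞)⁻¹ •
          ∑ A ∈ Finset.powersetCard k (Finset.univ : Finset (Fin n)),
            ((Measure.pi fun _ : Fin n => gaussPi d 0).prod
                (Measure.pi fun _ : Fin d =>
                  gaussianReal 0 (Real.toNNReal (α ^ 2 / d)))).bind
              fun Yz => Measure.pi fun i : Fin n =>
                if i ∈ A then Measure.dirac (Yz.1 i)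
                else gaussPi d (-(β • ∑ j ∈ A, Yz.1 j) - Yz.2))
        ≤ 0.1 := by
  refine ⟨1 / 1000, by norm_num, ?_⟩
  intro n d ε α β k hn hd hε hεα hα1 hk hlt hβ h1 h2
  have hn' : (0 : ℝ) < n := by exact_mod_cast hn
  have hd' : (0 : ℝ) < d := by exact_mod_cast hd
  obtain ⟨hβ0, hβn, hv, hε1, hT, hTT, hs⟩ := params n d ε α β hn' hd' hε hεα hα1 hlt hβ
    (h1.trans (by gcongr; exact min_le_left _ _)) (h1.trans (by gcongr; exact min_le_right _ _)) h2
  have hkn : k ≤ n := by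
    have : (k : ℝ) ≤ n := by rw [hk]; nlinarith
    exact_mod_cast this
  have hv' : ((Real.toNNReal (α ^ 2 / d) : NNReal) : ℝ) + β ^ 2 * k = 2 * β * ε := by
    rw [Real.coe_toNNReal _ (by positivity), hk]; exact hv
  have hpq : 2 * β * ε * (n - k) ≤ 1 / 64 := by
    have hk0 : (0 : ℝ) ≤ k := by positivity
    have : 2 * β * ε * (n - k) ≤ 2 * β * (1 / 100) * n := by
      have hkn' : (k : ℝ) ≤ n := by exact_mod_cast hkn
      gcongr
      linarith
    nlinarith
  have hS : (Finset.powersetCard k (Finset.univ : Finset (Fin n))).Nonempty :=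
    Finset.powersetCard_nonempty.mpr (by simpa using hkn)
  unfold tvDist
  refine Real.sSup_le ?_ (by norm_num)
  rintro x ⟨s, hsm, rfl⟩
  refine tv_mixture _ hS β (Real.toNNReal (α ^ 2 / d)) ?_ s hsm
  intro B hB
  have hBc := (Finset.mem_powersetCard.mp hB).2
  have e : ∀ A ∈ Finset.powersetCard k (Finset.univ : Finset (Fin n)), _ := fun A hA =>
    congrArg (fun q => q ^ d) (ell_second_moment A B (Finset.mem_powersetCard.mp hA).2 hBc β ε
      (Real.toNNReal (α ^ 2 / d)) hk hv' hpq)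
  rw [Finset.sum_congr rfl e]
  have e2 : ∀ r : ℝ, ENNReal.ofReal (1 / Real.sqrt r) ^ d = ENNReal.ofReal ((1 / Real.sqrt r) ^ d) :=
    fun r => (ENNReal.ofReal_pow (by positivity) d).symm
  simp_rw [e2]
  rw [← ENNReal.ofReal_sum_of_nonneg (fun A _ => by positivity)]
  have hb := sum_bound hn B hBc hkn ε β hk hε.le hε1 hβ0 hβn hT hTT hs
  refine (ENNReal.ofReal_le_ofReal hb).trans (le_of_eq ?_)
  rw [ENNReal.ofReal_mul (by positivity)]
  simp
end
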